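/- arXiv:1603.03526 — 2 statements merged into one kernel-verified Lean document; each statement's English description precedes it below -/
import Mathlib

section
/- Let m ≥ 2 and c₁, c₂ > 0, and let G be a bipartite graph on n vertices with girth greater than 2m such that c₁·n^{1/m} ≤ deg(v) ≤ c₂·n^{1/m} for all vertices v. Then for every ℓ with m+1 ≤ ℓ ≤ 2m, the number of cycles of length 2ℓ in G is at least α_ℓ·n^{2ℓ/m}, where α_ℓ = (9/(2ℓ·c₂))·(c₁^{m+1}/10)^{2ℓ−2m+1} (for n sufficiently large in terms of m, c₁, c₂). -/
open SimpleGraph Real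

def SimpleGraph.IsBip {V : Type*} (G : SimpleGraph V) : Prop :=
  ∃ A : Set V, ∀ ⦃u v : V⦄, G.Adj u v → (u ∈ A ↔ v ∉ A)

/-- The number of cycles of length `L` in `G`, counted as subgraphs: a cycle is
identified with its edge set. -/
noncomputable def cycleCount {V : Type*} [DecidableEq V] (G : SimpleGraph V) (L : ℕ) : ℕ :=
  Nat.card {s : Finset (Sym2 V) // ∃ (u : V) (w : G.Walk u u),
    w.IsCycle ∧ w.length = L ∧ w.edges.toFinset = s}

/-!
Fix a root `w` and consider the breadth-first layers around it. As the girth exceeds `2m`, paths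
with the same ends and total length at most `2m` coincide, so up to layer `m` every vertex other
than `w` has one parent, and its other neighbours are children. Hence, if all degrees are at least
`d + 1`, there are at least `d ^ (m + 1)` edges between the layers `m` and `m + 1`. Repeatedly
deleting vertices of degree below `s + 2` costs at most `(s + 2) * n` of them, and in what is left
every vertex `x` of layer `m` is an end of at least `deg x * s ^ (2k - 1)` paths of length `2k`
whose other end, again in layer `m`, lies in another branch at `w` than `x`: the last inner vertex
of the path, in layer `m + 1`, has at most one neighbour in the branch of `x`. The geodesics from
both ends to `w` close such a path up to a cycle of length `2(m + k)`. Summing over `x` and `w`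
counts each cycle at most `4(m + k)` times, and the bound results from `d ≈ c * n ^ (1 / m)` and
`s + 2 ≈ c ^ (m + 1) * n ^ (1 / m) / 5`.
-/

namespace ShortCycles

open Finset Walk

section Girth

variable {V : Type*} {G : SimpleGraph V} {M : ℕ} {u v w : V}

lemma eq_of_isPath_of_length_add_le (hg : (M : ℕ∞) < G.egirth) {p q : G.Walk u v}
    (hp : p.IsPath) (hq : q.IsPath) (hlen : p.length + q.length ≤ M) : p = q := by
  by_contra hne
  obtain ⟨u', v', p', q', hp', hq', hcycle⟩ := hp.exists_isCycle_of_ne hq hne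
  have hgirth := hg.trans_le (egirth_le_length hcycle)
  rw [length_append, length_reverse, Nat.cast_lt] at hgirth
  have := length_le_of_isSubwalk hp'
  have := length_le_of_isSubwalk hq'
  omega

lemma eq_snd_of_adj_of_mem_support (hg : (M : ℕ∞) < G.egirth) {p : G.Walk v w} (hp : p.IsPath)
    (hlen : p.length + 1 ≤ M) (h : G.Adj u v) (hu : u ∈ p.support) : u = p.snd := by
  classical
  have htake : p.takeUntil u hu = h.symm.toWalk := by
    refine eq_of_isPath_of_length_add_le hg (hp.takeUntil hu) (by simp [h.ne']) ?_
    have := p.length_takeUntil_le_length hu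
    simp only [Adj.length_toWalk]
    omega
  rw [← p.take_spec hu, htake]
  simp

lemma isPath_cons_of_ne_snd (hg : (M : ℕ∞) < G.egirth) {p : G.Walk v w} (hp : p.IsPath)
    (hlen : p.length + 1 ≤ M) (h : G.Adj u v) (hu : u ≠ p.snd) : (cons h p).IsPath :=
  (cons_isPath_iff h p).2
    ⟨hp, fun hmem ↦ hu (eq_snd_of_adj_of_mem_support hg hp hlen h hmem)⟩

end Girth

section Distance

variable {V : Type*} {G : SimpleGraph V} {M j m : ℕ} {b w x y z : V}

lemma edist_le_edist_add_one (h : G.Adj x y) : G.edist x w ≤ G.edist y w + 1 := by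
  rw [add_comm, ← edist_eq_one_iff_adj.2 h]
  exact G.edist_triangle

lemma exists_isPath_of_edist_eq (h : G.edist x w = j) :
    ∃ p : G.Walk x w, p.IsPath ∧ p.length = j := by
  obtain ⟨p, hp⟩ := exists_walk_of_edist_eq_coe h
  have hdist : G.dist x w = j := by simp [SimpleGraph.dist, h]
  exact ⟨p, p.isPath_of_length_eq_dist (hp.trans hdist.symm), hp⟩

lemma subsingleton_adj_edist_add_one_eq (hg : (M : ℕ∞) < G.egirth) (hz : G.edist z w = j)
    (hj : 2 * j ≤ M) : {y | G.Adj z y ∧ G.edist y w + 1 = j}.Subsingleton := by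
  have hgeodesic : ∀ y, G.Adj z y → G.edist y w + 1 = j →
      ∃ p : G.Walk z w, p.IsPath ∧ p.length = j ∧ p.snd = y := by
    intro y hzy hy
    obtain ⟨p, hp⟩ := exists_walk_of_edist_ne_top (G := G) (u := y) (v := w) (by
      rintro htop
      simp [htop] at hy)
    have hlen : (cons hzy p).length = j := by
      rw [← hp] at hy
      exact_mod_cast hy
    have hdist : G.dist z w = j := by simp [SimpleGraph.dist, hz]
    exact ⟨cons hzy p, isPath_of_length_eq_dist _ (hlen.trans hdist.symm), hlen, by simp⟩
  rintro y ⟨hzy, hy⟩ y' ⟨hzy', hy'⟩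
  obtain ⟨p, hp, hpj, rfl⟩ := hgeodesic y hzy hy
  obtain ⟨p', hp', hpj', rfl⟩ := hgeodesic y' hzy' hy'
  rw [eq_of_isPath_of_length_add_le hg hp hp' (by omega)]

lemma subsingleton_adj_edist_lt (hg : (M : ℕ∞) < G.egirth) (hm : 2 * m ≤ M) (hb : G.Adj b w)
    (hz : G.edist z w = m + 1) : {u | G.Adj z u ∧ G.edist u b < m}.Subsingleton := by
  have hzb : (m : ℕ∞) ≤ G.edist z b := by
    have := G.edist_triangle (u := z) (v := b) (w := w)
    rw [edist_eq_one_iff_adj.2 hb, hz] at this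
    exact (ENat.add_le_add_iff_right ENat.one_ne_top).1 this
  have hclose : ∀ u, G.Adj z u → G.edist u b < m →
      G.edist z b = m ∧ G.edist u b + 1 = m := by
    intro u hzu hu
    have hle : G.edist u b + 1 ≤ m := Order.add_one_le_of_lt hu
    have hzu' := edist_le_edist_add_one (w := b) hzu
    exact ⟨le_antisymm (hzu'.trans hle) hzb, le_antisymm hle (hzb.trans hzu')⟩
  rintro u ⟨hzu, hu⟩ u' ⟨hzu', hu'⟩
  exact subsingleton_adj_edist_add_one_eq hg (hclose u hzu hu).1 hm
    ⟨hzu, (hclose u hzu hu).2⟩ ⟨hzu', (hclose u' hzu' hu').2⟩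

lemma edist_ne_of_adj (c : G.Coloring Bool) (h : G.Adj x y) (hx : G.edist x w = j) :
    G.edist y w ≠ j := by
  intro hy
  obtain ⟨p, hp⟩ := exists_walk_of_edist_eq_coe hx
  obtain ⟨q, hq⟩ := exists_walk_of_edist_eq_coe hy
  have hpq : (c x ↔ c w) ↔ (c y ↔ c w) := by
    rw [← c.even_length_iff_congr p, ← c.even_length_iff_congr q, hp, hq]
  have hxy := c.valid h
  grind

lemma edist_add_one_eq_or_eq_add_one (c : G.Coloring Bool) (h : G.Adj x y)
    (hx : G.edist x w = j) : G.edist y w + 1 = j ∨ G.edist y w = j + 1 := by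
  have hyx := edist_le_edist_add_one (w := w) h.symm
  have hxy := edist_le_edist_add_one (w := w) h
  have hne := edist_ne_of_adj c h hx
  rw [hx] at hyx hxy
  obtain ⟨i, hi⟩ := ENat.ne_top_iff_exists.1 (ne_top_of_le_ne_top (by simp) hyx)
  rw [← hi] at hyx hxy hne ⊢
  norm_cast at *
  omega

end Distance

section Layers

variable {V : Type*} [Fintype V] {G : SimpleGraph V} {M d j : ℕ} {w x y : V}

open Classical in
/-- The sphere of radius `j` around `w`: the `j`-th layer of a breadth-first search from `w`. -/
noncomputable def layer (G : SimpleGraph V) (w : V) (j : ℕ) : Finset V :=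
  {x | G.edist x w = j}

/-- The bipartite graph formed by the edges of `G` between the layers `j` and `j + 1` of `w`. -/
noncomputable def layerGraph (G : SimpleGraph V) (w : V) (j : ℕ) : SimpleGraph V :=
  G.between (layer G w j) (layer G w (j + 1))

noncomputable instance : DecidableRel (layerGraph G w j).Adj :=
  Classical.decRel _

lemma mem_layer : x ∈ layer G w j ↔ G.edist x w = j := by
  simp [layer]

lemma layerGraph_isBipartiteWith (w : V) (j : ℕ) :
    (layerGraph G w j).IsBipartiteWith (layer G w j) (layer G w (j + 1)) := by
  refine between_isBipartiteWith (disjoint_coe.2 (disjoint_left.2 fun x hx hx' ↦ ?_))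
  rw [mem_layer] at hx hx'
  exact absurd (hx.symm.trans hx') (by norm_cast; omega)

lemma degree_layerGraph_le_one (hg : (M : ℕ∞) < G.egirth) (hj : 2 * (j + 1) ≤ M)
    (hy : y ∈ layer G w (j + 1)) : (layerGraph G w j).degree y ≤ 1 := by
  rw [← card_neighborFinset_eq_degree]
  have hparent : ∀ x ∈ (layerGraph G w j).neighborFinset y,
      G.Adj y x ∧ G.edist x w + 1 = (j + 1 : ℕ) := by
    intro x hx
    rw [mem_neighborFinset] at hx
    have := (layerGraph_isBipartiteWith w j).mem_of_mem_adj' hy hx.symm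
    exact ⟨between_le hx, by rw [mem_layer.1 this]; rfl⟩
  exact card_le_one.2 fun x hx x' hx' ↦
    subsingleton_adj_edist_add_one_eq hg (mem_layer.1 hy) hj (hparent x hx) (hparent x' hx')

lemma card_edgeFinset_layerGraph_le (hg : (M : ℕ∞) < G.egirth) (hj : 2 * (j + 1) ≤ M) :
    #(layerGraph G w j).edgeFinset ≤ #(layer G w (j + 1)) := by
  rw [← isBipartiteWith_sum_degrees_eq_card_edges' (layerGraph_isBipartiteWith w j)]
  exact (sum_le_card_nsmul _ _ 1 fun y hy ↦ degree_layerGraph_le_one hg hj hy).trans_eq (by simp)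

variable [DecidableRel G.Adj]

lemma le_degree_layerGraph (c : G.Coloring Bool) (hg : (M : ℕ∞) < G.egirth) (hj : 2 * j ≤ M)
    (hx : x ∈ layer G w j) (hd : d + 1 ≤ G.degree x) : d ≤ (layerGraph G w j).degree x := by
  have hparents : #{y ∈ G.neighborFinset x | G.edist y w + 1 = j} ≤ 1 :=
    card_le_one.2 fun y hy y' hy' ↦
      subsingleton_adj_edist_add_one_eq hg (mem_layer.1 hx) hj (by simpa using hy)
        (by simpa using hy')
  have hchildren : {y ∈ G.neighborFinset x | ¬ G.edist y w + 1 = j} ⊆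
      (layerGraph G w j).neighborFinset x := by
    intro y hy
    obtain ⟨hxy, hy⟩ := mem_filter.1 hy
    rw [mem_neighborFinset] at hxy ⊢
    have := (edist_add_one_eq_or_eq_add_one c hxy (mem_layer.1 hx)).resolve_left hy
    exact between_adj.2 ⟨hxy, Or.inl ⟨hx, mem_layer.2 (by exact_mod_cast this)⟩⟩
  have hsplit := card_filter_add_card_filter_not (s := G.neighborFinset x)
    (fun y ↦ G.edist y w + 1 = j)
  have := card_le_card hchildren
  rw [card_neighborFinset_eq_degree] at *
  omega

lemma mul_card_layer_le_card_edgeFinset_layerGraph (c : G.Coloring Bool)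
    (hg : (M : ℕ∞) < G.egirth) (hj : 2 * j ≤ M) (hd : ∀ x, d + 1 ≤ G.degree x) :
    d * #(layer G w j) ≤ #(layerGraph G w j).edgeFinset := by
  rw [← isBipartiteWith_sum_degrees_eq_card_edges (layerGraph_isBipartiteWith w j), mul_comm,
    ← smul_eq_mul]
  exact card_nsmul_le_sum _ _ _ fun x hx ↦ le_degree_layerGraph c hg hj hx (hd x)

lemma pow_le_card_layer (c : G.Coloring Bool) (hg : (M : ℕ∞) < G.egirth) (hj : 2 * j ≤ M)
    (hd : ∀ x, d + 1 ≤ G.degree x) (w : V) : d ^ j ≤ #(layer G w j) := by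
  induction j with
  | zero => simpa using card_pos.2 ⟨w, mem_layer.2 (by simp)⟩
  | succ j ih =>
    calc d ^ (j + 1) = d * d ^ j := pow_succ' d j
      _ ≤ d * #(layer G w j) := by gcongr; exact ih (by omega)
      _ ≤ #(layerGraph G w j).edgeFinset :=
        mul_card_layer_le_card_edgeFinset_layerGraph c hg (by omega) hd
      _ ≤ #(layer G w (j + 1)) := card_edgeFinset_layerGraph_le hg hj

lemma pow_succ_le_card_edgeFinset_layerGraph (c : G.Coloring Bool) (hg : (M : ℕ∞) < G.egirth)
    (hj : 2 * j ≤ M) (hd : ∀ x, d + 1 ≤ G.degree x) (w : V) :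
    d ^ (j + 1) ≤ #(layerGraph G w j).edgeFinset :=
  calc d ^ (j + 1) = d * d ^ j := pow_succ' d j
    _ ≤ d * #(layer G w j) := by gcongr; exact pow_le_card_layer c hg hj hd w
    _ ≤ #(layerGraph G w j).edgeFinset :=
      mul_card_layer_le_card_edgeFinset_layerGraph c hg hj hd

end Layers

section Pruning

lemma exists_le_forall_mem_support_le_degree {V : Type*} [Fintype V] (H : SimpleGraph V)
    [DecidableRel H.Adj] (t : ℕ) :
    ∃ (K : SimpleGraph V) (_ : DecidableRel K.Adj), K ≤ H ∧ (∀ v ∈ K.support, t ≤ K.degree v) ∧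
      #H.edgeFinset ≤ #K.edgeFinset + t * H.support.ncard := by
  classical
  induction hN : H.support.ncard using Nat.strong_induction_on generalizing H with
  | _ N ih =>
    by_cases hH : ∀ v ∈ H.support, t ≤ H.degree v
    · exact ⟨H, inferInstance, le_rfl, hH, Nat.le_add_right _ _⟩
    push Not at hH
    obtain ⟨v, hv, hvt⟩ := hH
    have hsupport : (H.deleteIncidenceSet v).support.ncard + 1 ≤ N := by
      rw [← hN, ← Set.ncard_sdiff_singleton_add_one hv]
      gcongr
      · exact Set.toFinite _
      · exact (H.support_deleteIncidenceSet_subset v)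
    obtain ⟨K, hdec, hK, hdeg, hedges⟩ := ih _ (by omega) (H.deleteIncidenceSet v) rfl
    refine ⟨K, hdec, hK.trans (H.deleteIncidenceSet_le v), hdeg, ?_⟩
    rw [card_edgeFinset_deleteIncidenceSet] at hedges
    calc #H.edgeFinset
        ≤ #K.edgeFinset + t * ((H.deleteIncidenceSet v).support.ncard + 1) := by
          rw [mul_add_one]; omega
      _ ≤ #K.edgeFinset + t * N := by gcongr

end Pruning

section PathCounting

variable {V : Type*} {G : SimpleGraph V} {M i s : ℕ} {w : V}

lemma exists_finset_cons (S : Finset (Σ v, G.Walk v w)) {P : (Σ v, G.Walk v w) → Prop}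
    (hext : ∀ q ∈ S, ∃ B : Finset V, s ≤ #B ∧
      ∀ u ∈ B, ∃ h : G.Adj u q.1, P ⟨u, cons h q.2⟩) :
    ∃ S' : Finset (Σ v, G.Walk v w), (∀ q ∈ S', P q) ∧ #S * s ≤ #S' := by
  classical
  choose! B hcard hB using hext
  have hadj (y : S.sigma B) : G.Adj y.1.2 y.1.1.1 :=
    (hB _ (mem_sigma.1 y.2).1 _ (mem_sigma.1 y.2).2).1
  let extend (y : S.sigma B) : Σ v, G.Walk v w := ⟨y.1.2, cons (hadj y) y.1.1.2⟩
  have hinj : Function.Injective extend := by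
    rintro ⟨⟨⟨v, p⟩, u⟩, hy⟩ ⟨⟨⟨v', p'⟩, u'⟩, hy'⟩ heq
    simp only [extend, Sigma.mk.injEq] at heq
    obtain ⟨rfl, heq⟩ := heq
    obtain ⟨rfl, heq⟩ := cons.inj (eq_of_heq heq)
    obtain rfl := eq_of_heq heq
    rfl
  refine ⟨univ.image extend, ?_, ?_⟩
  · intro q hq
    obtain ⟨⟨⟨p, u⟩, hy⟩, -, rfl⟩ := mem_image.1 hq
    exact (hB _ (mem_sigma.1 hy).1 _ (mem_sigma.1 hy).2).2
  · rw [card_image_of_injective _ hinj, card_univ, Fintype.card_coe, card_sigma, ← smul_eq_mul]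
    exact card_nsmul_le_sum _ _ _ hcard

lemma exists_finset_isPath [G.LocallyFinite] (hg : (M : ℕ∞) < G.egirth)
    (hdeg : ∀ v ∈ G.support, s + 1 ≤ G.degree v) (x : V) (hi : i + 1 ≤ M) :
    ∃ S : Finset (Σ v, G.Walk v x),
      (∀ q ∈ S, q.2.IsPath ∧ q.2.length = i + 1) ∧ G.degree x * s ^ i ≤ #S := by
  classical
  induction i with
  | zero =>
    obtain ⟨S, hS, hcard⟩ := exists_finset_cons {(⟨x, nil⟩ : Σ v, G.Walk v x)}
      (s := G.degree x) (P := fun q ↦ q.2.IsPath ∧ q.2.length = 1) (by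
        simp only [mem_singleton, forall_eq]
        refine ⟨G.neighborFinset x, le_rfl, fun u hu ↦ ?_⟩
        rw [mem_neighborFinset] at hu
        exact ⟨hu.symm, by simp [hu.ne'], rfl⟩)
    exact ⟨S, hS, by simpa using hcard⟩
  | succ i ih =>
    obtain ⟨S, hS, hcard⟩ := ih (by omega)
    obtain ⟨S', hS', hcard'⟩ := exists_finset_cons S (s := s)
      (P := fun q ↦ q.2.IsPath ∧ q.2.length = i + 1 + 1) (by
        rintro ⟨v, q⟩ hq
        obtain ⟨hq, hlen⟩ : q.IsPath ∧ q.length = i + 1 := hS _ hq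
        have hv : v ∈ G.support :=
          ⟨q.snd, adj_snd (not_nil_iff_lt_length.2 (by omega))⟩
        refine ⟨(G.neighborFinset v).erase q.snd, ?_, fun u hu ↦ ?_⟩
        · have := pred_card_le_card_erase (s := G.neighborFinset v) (a := q.snd)
          have := hdeg v hv
          rw [card_neighborFinset_eq_degree] at *
          omega
        · rw [mem_erase, mem_neighborFinset] at hu
          exact ⟨hu.2.symm, isPath_cons_of_ne_snd hg hq (by omega) _ hu.1, by simp [hlen]⟩)
    refine ⟨S', hS', le_trans ?_ hcard'⟩
    rw [pow_succ, ← mul_assoc]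
    gcongr

end PathCounting

section Bipartition

variable {V : Type*} {H K : SimpleGraph V} {S T : Set V} {u v x : V}

lemma isBipartiteWith_of_le (hKH : K ≤ H) (hH : H.IsBipartiteWith S T) : K.IsBipartiteWith S T :=
  ⟨hH.disjoint, fun _ _ h ↦ hH.mem_of_adj (hKH h)⟩

lemma mem_parts_of_parity_length (hH : H.IsBipartiteWith S T) (q : H.Walk v x) (hx : x ∈ S) :
    (Even q.length → v ∈ S) ∧ (Odd q.length → v ∈ T) := by
  induction q with
  | nil => simpa using hx
  | cons h q ih =>
    rw [length_cons, Nat.even_add_one, Nat.odd_add_one, Nat.not_even_iff_odd, Nat.not_odd_iff_even]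
    exact ⟨fun hodd ↦ hH.mem_of_mem_adj' ((ih hx).2 hodd) h,
      fun heven ↦ hH.mem_of_mem_adj ((ih hx).1 heven) h.symm⟩

lemma mem_union_of_mem_support (hH : H.IsBipartiteWith S T) {q : H.Walk v x} (hx : x ∈ S)
    (hu : u ∈ q.support) : u ∈ S ∪ T := by
  classical
  obtain ⟨heven, hodd⟩ := mem_parts_of_parity_length hH (q.dropUntil u hu) hx
  exact (Nat.even_or_odd _).imp heven hodd

end Bipartition

section Closing

variable {V : Type*} {G : SimpleGraph V} {M i m : ℕ} {u w x y : V}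

lemma eq_end_of_mem_support_of_length_le_edist {p : G.Walk w x} (hu : u ∈ p.support)
    (hle : (p.length : ℕ∞) ≤ G.edist w u) : u = x := by
  classical
  by_contra hne
  have := hle.trans (edist_le (p.takeUntil u hu))
  exact (length_takeUntil_lt_length hu hne).not_ge (by exact_mod_cast this)

lemma eq_start_of_mem_support_of_snd_ne (hg : (M : ℕ∞) < G.egirth) {r : G.Walk w y}
    {p : G.Walk w x} (hr : r.IsPath) (hp : p.IsPath) (hlen : r.length + p.length ≤ M)
    (hsnd : r.snd ≠ p.snd) (hur : u ∈ r.support) (hup : u ∈ p.support) : u = w := by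
  classical
  by_contra hne
  have hrlen := r.length_takeUntil_le_length hur
  have hplen := p.length_takeUntil_le_length hup
  have heq := eq_of_isPath_of_length_add_le hg (hr.takeUntil hur) (hp.takeUntil hup) (by omega)
  exact hsnd (by rw [← snd_takeUntil hne _ hur, heq, snd_takeUntil hne _ hup])

lemma ne_start_of_mem_tail_support {p : G.Walk w x} (hp : p.IsPath) (hu : u ∈ p.support.tail) :
    u ≠ w := by
  have hnodup := hp.support_nodup
  rw [← cons_tail_support, List.nodup_cons] at hnodup
  exact ne_of_mem_of_not_mem hu hnodup.1

lemma isCycle_append_append_reverse (hg : (M : ℕ∞) < G.egirth) {r : G.Walk w y} {q : G.Walk y x}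
    {p : G.Walk w x} (hr : r.IsPath) (hq : q.IsPath) (hp : p.IsPath)
    (hlen : r.length + p.length ≤ M) (hsnd : r.snd ≠ p.snd) (hqlen : 1 < q.length)
    (hqr : ∀ u ∈ q.support, u ∈ r.support → u = y)
    (hqp : ∀ u ∈ q.support, u ∈ p.support → u = x) :
    (r.append (q.append p.reverse)).IsCycle := by
  have hp' : p.reverse.IsPath := (isPath_reverse_iff p).2 hp
  have hp_support : ∀ {u}, u ∈ p.reverse.support.tail → u ∈ p.support := fun hu ↦ by
    simpa using List.mem_of_mem_tail hu
  have hqp' : (q.append p.reverse).IsPath := by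
    rw [isPath_def, support_append, List.nodup_append']
    exact ⟨hq.support_nodup, hp'.support_nodup.tail, fun u huq hup ↦
      ne_start_of_mem_tail_support hp' hup (hqp u huq (hp_support hup))⟩
  refine hr.isCycle_append hqp' (fun u hur hu ↦ ?_) (Or.inr (by rw [length_append]; omega))
  have hur' := List.mem_of_mem_tail hur
  rcases (mem_tail_support_append_iff q p.reverse).1 hu with huq | hup
  · exact ne_start_of_mem_tail_support hq huq (hqr u (List.mem_of_mem_tail huq) hur')
  · exact ne_start_of_mem_tail_support hr hur
      (eq_start_of_mem_support_of_snd_ne hg hr hp hlen hsnd hur' (hp_support hup))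

lemma sigma_eq_of_getVert_eq {q q' : Σ v, G.Walk v x} (hlen : q.2.length = q'.2.length)
    (h : ∀ j ≤ q.2.length, q.2.getVert j = q'.2.getVert j) : q = q' := by
  obtain ⟨v, q⟩ := q
  obtain ⟨v', q'⟩ := q'
  obtain rfl : v = v' := by simpa using h 0 (Nat.zero_le _)
  exact congrArg (Sigma.mk v) (ext_getVert_le_length hlen h)

lemma getVert_append_append {v : V} (r : G.Walk w y) (q : G.Walk y x) (p : G.Walk x v)
    (hi : i ≤ q.length) : (r.append (q.append p)).getVert (r.length + i) = q.getVert i := by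
  rw [getVert_append, if_neg (by omega), Nat.add_sub_cancel_left, getVert_append', if_pos hi]

lemma snd_ne_of_length_le_edist {r : G.Walk w y} (hr : ¬ r.Nil)
    (hb : (r.length : ℕ∞) ≤ G.edist y u) : r.snd ≠ u := by
  rintro rfl
  rw [edist_comm, ← length_tail_add_one hr] at hb
  exact absurd (hb.trans (edist_le r.tail)) (by norm_cast; omega)

variable [Fintype V] {K : SimpleGraph V}

lemma isCycle_append_mapLe_append_reverse (hg : ((2 * m : ℕ) : ℕ∞) < G.egirth)
    (hK : K ≤ layerGraph G w m) (hx : x ∈ layer G w m) {r : G.Walk w y} {q : K.Walk y x}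
    {p : G.Walk w x} (hr : r.IsPath) (hq : q.IsPath) (hp : p.IsPath) (hrm : r.length = m)
    (hqlen : 1 < q.length) (hpm : p.length = m) (hm : m ≠ 0) (hb : m ≤ G.edist y p.snd) :
    (r.append ((q.mapLe (hK.trans between_le)).append p.reverse)).IsCycle := by
  have hfar : ∀ u ∈ (q.mapLe (hK.trans between_le)).support, (m : ℕ∞) ≤ G.edist w u := by
    intro u hu
    rw [support_mapLe_eq_support] at hu
    rw [edist_comm]
    rcases mem_union_of_mem_support
      (isBipartiteWith_of_le hK (layerGraph_isBipartiteWith w m)) hx hu with h | h <;>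
      rw [mem_layer.1 h]
    exact_mod_cast m.le_succ
  refine isCycle_append_append_reverse hg hr ((isPath_mapLe _).2 hq) hp (by omega)
    (snd_ne_of_length_le_edist (not_nil_iff_lt_length.2 (by omega)) (hrm ▸ hb))
    (by rwa [length_mapLe]) (fun u hu hur ↦ ?_) (fun u hu hup ↦ ?_)
  · exact eq_end_of_mem_support_of_length_le_edist hur (hrm ▸ hfar u hu)
  · exact eq_end_of_mem_support_of_length_le_edist hup (hpm ▸ hfar u hu)

variable [DecidableRel K.Adj] {b : V} {s : ℕ}

/- Applied with `b` the first vertex of a geodesic from `w` to `x`: the bound `m ≤ edist q.1 b`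
then makes every geodesic from `w` to the other end `q.1` leave `w` through a different vertex. -/
lemma exists_finset_isPath_le_edist (hg : ((2 * m : ℕ) : ℕ∞) < G.egirth)
    (hK : K ≤ layerGraph G w m) (hdeg : ∀ v ∈ K.support, s + 2 ≤ K.degree v) (hb : G.Adj b w)
    (hx : x ∈ layer G w m) (hi : i + 1 ≤ m) :
    ∃ S : Finset (Σ v, K.Walk v x),
      (∀ q ∈ S, q.2.IsPath ∧ q.2.length = 2 * (i + 1) ∧ m ≤ G.edist q.1 b) ∧
        K.degree x * s ^ (2 * i + 1) ≤ #S := by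
  classical
  have hKG : K ≤ G := hK.trans between_le
  have hgK : ((2 * m : ℕ) : ℕ∞) < K.egirth := hg.trans_le (egirth_anti hKG)
  obtain ⟨S, hS, hcard⟩ := exists_finset_isPath (s := s) hgK
    (fun v hv ↦ (Nat.le_succ _).trans (hdeg v hv)) x (i := 2 * i) (by omega)
  obtain ⟨S', hS', hcard'⟩ := exists_finset_cons S (s := s)
    (P := fun q ↦ q.2.IsPath ∧ q.2.length = 2 * (i + 1) ∧ m ≤ G.edist q.1 b) (by
      rintro ⟨z, q⟩ hq
      obtain ⟨hq, hlen⟩ : q.IsPath ∧ q.length = 2 * i + 1 := hS _ hq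
      have hz : z ∈ layer G w (m + 1) := (mem_parts_of_parity_length
        (isBipartiteWith_of_le hK (layerGraph_isBipartiteWith w m)) q hx).2 (by simp [hlen])
      have hz_edist : G.edist z w = m + 1 := by exact_mod_cast mem_layer.1 hz
      have hclose : #{u ∈ K.neighborFinset z | ¬ m ≤ G.edist u b} ≤ 1 :=
        card_le_one.2 fun u hu u' hu' ↦ by
          simp only [mem_filter, mem_neighborFinset, not_le] at hu hu'
          exact subsingleton_adj_edist_lt hg le_rfl hb hz_edist ⟨hKG hu.1, hu.2⟩
            ⟨hKG hu'.1, hu'.2⟩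
      refine ⟨{u ∈ K.neighborFinset z | m ≤ G.edist u b}.erase q.snd, ?_, fun u hu ↦ ?_⟩
      · have hsplit := card_filter_add_card_filter_not (s := K.neighborFinset z)
          (fun u ↦ (m : ℕ∞) ≤ G.edist u b)
        have := pred_card_le_card_erase
          (s := {u ∈ K.neighborFinset z | m ≤ G.edist u b}) (a := q.snd)
        have := hdeg z ⟨q.snd, adj_snd (not_nil_iff_lt_length.2 (by omega))⟩
        rw [card_neighborFinset_eq_degree] at hsplit
        omega
      · simp only [mem_erase, mem_filter, mem_neighborFinset] at hu
        exact ⟨hu.2.1.symm, isPath_cons_of_ne_snd hgK hq (by omega) _ hu.1,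
          by rw [length_cons, hlen]; ring, hu.2.2⟩)
  refine ⟨S', hS', le_trans ?_ hcard'⟩
  rw [pow_succ, ← mul_assoc]
  gcongr

lemma exists_finset_isCycle_through (hg : ((2 * m : ℕ) : ℕ∞) < G.egirth)
    (hK : K ≤ layerGraph G w m) (hdeg : ∀ v ∈ K.support, s + 2 ≤ K.degree v)
    (hx : x ∈ layer G w m) (hi : i + 1 ≤ m) :
    ∃ T : Finset (G.Walk w w),
      (∀ c ∈ T, c.IsCycle ∧ c.length = 2 * (m + (i + 1)) ∧ c.getVert (m + 2 * (i + 1)) = x) ∧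
        K.degree x * s ^ (2 * i + 1) ≤ #T := by
  classical
  obtain ⟨p, hp, hpm⟩ := exists_isPath_of_edist_eq (edist_comm.trans (mem_layer.1 hx))
  obtain ⟨S, hS, hcard⟩ := exists_finset_isPath_le_edist hg hK hdeg
    (adj_snd (p := p) (not_nil_iff_lt_length.2 (by omega))).symm hx hi
  have hgeodesic (q : S) : ∃ r : G.Walk w q.1.1, r.IsPath ∧ r.length = m :=
    exists_isPath_of_edist_eq (edist_comm.trans (mem_layer.1 ((mem_parts_of_parity_length
      (isBipartiteWith_of_le hK (layerGraph_isBipartiteWith w m)) q.1.2 hx).1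
        (by simp [hS _ q.2]))))
  choose r hr hrm using hgeodesic
  let close (q : S) : G.Walk w w :=
    (r q).append ((q.1.2.mapLe (hK.trans between_le)).append p.reverse)
  have hgetVert (q : S) {j : ℕ} (hj : j ≤ 2 * (i + 1)) :
      (close q).getVert (m + j) = q.1.2.getVert j := by
    rw [← hrm q, getVert_append_append _ _ _ (by rwa [length_mapLe, (hS _ q.2).2.1]), getVert_map]
    rfl
  refine ⟨univ.image close, fun c hc ↦ ?_, ?_⟩
  · obtain ⟨q, -, rfl⟩ := mem_image.1 hc
    obtain ⟨hq, hlen, hb⟩ := hS _ q.2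
    refine ⟨isCycle_append_mapLe_append_reverse hg hK hx (hr q) hq hp (hrm q) (by omega) hpm
      (by omega) hb, ?_, ?_⟩
    · simp only [close, length_append, length_mapLe, length_reverse, hlen, hrm, hpm]
      ring
    · rw [hgetVert q le_rfl, ← hlen, getVert_length]
  · have hinj : Function.Injective close := fun q q' heq ↦ by
      refine Subtype.ext (sigma_eq_of_getVert_eq ?_ fun j hj ↦ ?_)
      · rw [(hS _ q.2).2.1, (hS _ q'.2).2.1]
      · rw [(hS _ q.2).2.1] at hj
        rw [← hgetVert q hj, heq, hgetVert q' hj]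
    rwa [card_image_of_injective _ hinj, card_univ, Fintype.card_coe]

lemma exists_finset_isCycle (hg : ((2 * m : ℕ) : ℕ∞) < G.egirth)
    (hK : K ≤ layerGraph G w m) (hdeg : ∀ v ∈ K.support, s + 2 ≤ K.degree v) (hi : i + 1 ≤ m) :
    ∃ T : Finset (G.Walk w w), (∀ c ∈ T, c.IsCycle ∧ c.length = 2 * (m + (i + 1))) ∧
      #K.edgeFinset * s ^ (2 * i + 1) ≤ #T := by
  classical
  have hthrough (x : V) (hx : x ∈ layer G w m) := exists_finset_isCycle_through hg hK hdeg hx hi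
  choose! T hT hcard using hthrough
  have hdisj : (layer G w m : Set V).PairwiseDisjoint T := fun x hx x' hx' hne ↦
    disjoint_left.2 fun c hc hc' ↦ hne ((hT x hx c hc).2.2.symm.trans (hT x' hx' c hc').2.2)
  refine ⟨(layer G w m).biUnion T, fun c hc ↦ ?_, ?_⟩
  · obtain ⟨x, hx, hc⟩ := mem_biUnion.1 hc
    exact ⟨(hT x hx c hc).1, (hT x hx c hc).2.1⟩
  · rw [card_biUnion hdisj, ← isBipartiteWith_sum_degrees_eq_card_edges
      (isBipartiteWith_of_le hK (layerGraph_isBipartiteWith w m)), sum_mul]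
    exact sum_le_sum hcard

end Closing

section CycleCounting

variable {V : Type*} {G : SimpleGraph V} {j L : ℕ} {w y : V}

lemma eq_getVert_or_eq_getVert_of_mem_edges {c : G.Walk w w} (hc : c.IsCycle)
    (hj : j + 2 ≤ c.length) (hy : s(c.getVert (j + 1), y) ∈ c.edges) :
    y = c.getVert j ∨ y = c.getVert (j + 2) := by
  obtain ⟨k, hk, hedge⟩ := (mk_mem_edges_iff_exists c).1 hy
  rcases Sym2.eq_iff.1 hedge with ⟨hvert, rfl⟩ | ⟨rfl, hvert⟩
  · obtain rfl : k = j + 1 :=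
      hc.getVert_injOn' (Set.mem_ofPred.2 (by omega)) (Set.mem_ofPred.2 (by omega)) hvert
    exact Or.inr rfl
  · have hkj : k + 1 = j + 1 :=
      hc.getVert_injOn (Set.mem_ofPred.2 (by omega)) (Set.mem_ofPred.2 (by omega)) hvert
    obtain rfl : k = j := by omega
    exact Or.inl rfl

lemma eq_of_isCycle_of_mem_edges_iff {c c' : G.Walk w w} (hc : c.IsCycle) (hc' : c'.IsCycle)
    (hlen : c.length = c'.length) (hedges : ∀ e, e ∈ c.edges ↔ e ∈ c'.edges)
    (hsnd : c.snd = c'.snd) : c = c' := by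
  have hconsecutive : ∀ j, j + 1 ≤ c.length →
      c.getVert j = c'.getVert j ∧ c.getVert (j + 1) = c'.getVert (j + 1) := by
    intro j hj
    induction j with
    | zero => exact ⟨by simp, hsnd⟩
    | succ j ih =>
      obtain ⟨hj₀, hj₁⟩ := ih (by omega)
      refine ⟨hj₁, ?_⟩
      have hedge : s(c.getVert (j + 1), c'.getVert (j + 2)) ∈ c.edges := by
        rw [hedges, hj₁, mk_mem_edges_iff_exists]
        exact ⟨j + 1, by omega, rfl⟩
      rcases eq_getVert_or_eq_getVert_of_mem_edges hc hj hedge with hback | hforth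
      · exact absurd (hj₀.symm.trans hback.symm)
          (hc'.getVert_sub_one_ne_getVert_add_one (i := j + 1) (by omega))
      · exact hforth.symm
  refine ext_getVert_le_length hlen fun j hj ↦ ?_
  cases j with
  | zero => simp
  | succ j => exact (hconsecutive j hj).2

lemma card_filter_mk_mem_le [Fintype V] [DecidableEq V] (E : Finset (Sym2 V)) :
    #{a : V × V | s(a.1, a.2) ∈ E} ≤ 2 * #E := by
  refine card_le_mul_card_image_of_maps_to (f := fun a : V × V ↦ s(a.1, a.2))
    (fun a ha ↦ (mem_filter.1 ha).2) 2 fun e _ ↦ ?_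
  induction e with
  | _ a b =>
    refine (card_le_card (t := {(a, b), (b, a)}) fun p hp ↦ ?_).trans card_le_two
    simpa [Prod.ext_iff] using (mem_filter.1 hp).2

variable [Finite V] [DecidableEq V]

lemma card_le_of_edges_toFinset_eq {E : Finset (Sym2 V)} {T : Finset (Σ w, G.Walk w w)}
    (hT : ∀ c ∈ T, c.2.IsCycle ∧ c.2.edges.toFinset = E) : #T ≤ 2 * #E := by
  have := Fintype.ofFinite V
  have hlength : ∀ c ∈ T, c.2.length = #E := fun c hc ↦ by
    rw [← (hT c hc).2, List.toFinset_card_of_nodup (hT c hc).1.edges_nodup, length_edges]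
  refine (card_le_card_of_injOn (fun c ↦ (c.1, c.2.snd)) (fun c hc ↦ ?_) ?_).trans
    (card_filter_mk_mem_le E)
  · rw [mem_coe, mem_filter_univ, ← (hT c hc).2, List.mem_toFinset]
    exact mk_start_snd_mem_edges (hT c hc).1.not_nil
  · rintro ⟨w, c⟩ hc ⟨w', c'⟩ hc' heq
    obtain ⟨rfl, hsnd⟩ := Prod.ext_iff.1 heq
    refine congrArg (Sigma.mk w) (eq_of_isCycle_of_mem_edges_iff (hT _ hc).1 (hT _ hc').1
      ((hlength _ hc).trans (hlength _ hc').symm) (fun e ↦ ?_) hsnd)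
    rw [← List.mem_toFinset, (hT _ hc).2, ← (hT _ hc').2, List.mem_toFinset]

lemma card_le_two_mul_length_mul_cycleCount (T : Finset (Σ w, G.Walk w w))
    (hT : ∀ c ∈ T, c.2.IsCycle ∧ c.2.length = L) : #T ≤ 2 * L * cycleCount G L := by
  calc #T ≤ 2 * L * #(T.image fun c ↦ c.2.edges.toFinset) := by
        refine card_le_mul_card_image T _ fun E hE ↦ ?_
        obtain ⟨c, hc, rfl⟩ := mem_image.1 hE
        rw [← (hT c hc).2, ← length_edges, ← List.toFinset_card_of_nodup (hT c hc).1.edges_nodup]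
        refine card_le_of_edges_toFinset_eq fun c' hc' ↦ ?_
        exact ⟨(hT c' (mem_filter.1 hc').1).1, (mem_filter.1 hc').2⟩
    _ ≤ 2 * L * cycleCount G L := by
        gcongr
        rw [← Nat.card_eq_finsetCard]
        refine Nat.card_mono (Set.toFinite _) fun E hE ↦ ?_
        obtain ⟨c, hc, rfl⟩ := mem_image.1 hE
        exact ⟨c.1, c.2, (hT c hc).1, (hT c hc).2, rfl⟩

end CycleCounting

section LowerBound

variable {V : Type*} [Fintype V] {G : SimpleGraph V} {d e i m s : ℕ}

lemma nonempty_coloring_of_isBip {V : Type*} {G : SimpleGraph V} (h : G.IsBip) :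
    Nonempty (G.Coloring Bool) := by
  classical
  obtain ⟨A, hA⟩ := h
  exact ⟨Coloring.mk (fun v ↦ decide (v ∈ A)) fun huv ↦ by simp [hA huv]⟩

variable [DecidableRel G.Adj]

lemma pow_le_card (C : G.Coloring Bool) (hg : ((2 * m : ℕ) : ℕ∞) < G.egirth)
    (hd : ∀ x, d + 1 ≤ G.degree x) [Nonempty V] : d ^ m ≤ Fintype.card V :=
  (pow_le_card_layer C hg le_rfl hd (Classical.arbitrary V)).trans (card_le_univ _)

lemma exists_finset_isCycle_of_le_degree (C : G.Coloring Bool)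
    (hg : ((2 * m : ℕ) : ℕ∞) < G.egirth) (hd : ∀ x, d + 1 ≤ G.degree x)
    (he : e + (s + 2) * Fintype.card V ≤ d ^ (m + 1)) (hi : i + 1 ≤ m) (w : V) :
    ∃ T : Finset (G.Walk w w), (∀ c ∈ T, c.IsCycle ∧ c.length = 2 * (m + (i + 1))) ∧
      e * s ^ (2 * i + 1) ≤ #T := by
  obtain ⟨K, _, hK, hdeg, hedges⟩ :=
    exists_le_forall_mem_support_le_degree (layerGraph G w m) (s + 2)
  obtain ⟨T, hT, hcard⟩ := exists_finset_isCycle hg hK hdeg hi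
  have hKe : e ≤ #K.edgeFinset := by
    have := calc e + (s + 2) * Fintype.card V
        ≤ #(layerGraph G w m).edgeFinset :=
          he.trans (pow_succ_le_card_edgeFinset_layerGraph C hg le_rfl hd w)
      _ ≤ #K.edgeFinset + (s + 2) * (layerGraph G w m).support.ncard := hedges
      _ ≤ #K.edgeFinset + (s + 2) * Fintype.card V := by
          gcongr
          exact Nat.card_eq_fintype_card (α := V) ▸ Set.ncard_le_card _
    exact Nat.le_of_add_le_add_right this
  exact ⟨T, hT, le_trans (by gcongr) hcard⟩

lemma card_mul_mul_pow_le_cycleCount [DecidableEq V] (C : G.Coloring Bool)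
    (hg : ((2 * m : ℕ) : ℕ∞) < G.egirth) (hd : ∀ x, d + 1 ≤ G.degree x)
    (he : e + (s + 2) * Fintype.card V ≤ d ^ (m + 1)) (hi : i + 1 ≤ m) :
    Fintype.card V * (e * s ^ (2 * i + 1)) ≤
      2 * (2 * (m + (i + 1))) * cycleCount G (2 * (m + (i + 1))) := by
  choose T hT hcard using exists_finset_isCycle_of_le_degree C hg hd he hi
  calc Fintype.card V * (e * s ^ (2 * i + 1)) ≤ ∑ w, #(T w) := by
        rw [← card_univ, ← smul_eq_mul]
        exact card_nsmul_le_sum _ _ _ fun w _ ↦ hcard w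
    _ = #(univ.sigma T) := (card_sigma _ _).symm
    _ ≤ _ := card_le_two_mul_length_mul_cycleCount _ fun c hc ↦ hT c.1 c.2 (mem_sigma.1 hc).2

end LowerBound

section Asymptotics

lemma nine_tenths_mul_pow_le_sub_one_pow {x : ℝ} {j : ℕ} (hx : 1 ≤ x) (hj : 10 * j ≤ x) :
    9 / 10 * x ^ j ≤ (x - 1) ^ j := by
  have hx₀ : 0 < x := by positivity
  have hinv : x⁻¹ ≤ 1 := inv_le_one_of_one_le₀ hx
  have hsmall : j * x⁻¹ ≤ 1 / 10 := by
    rw [← div_eq_mul_inv, div_le_iff₀ hx₀]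
    linarith
  calc 9 / 10 * x ^ j ≤ (1 + j * -x⁻¹) * x ^ j := by gcongr; linarith
    _ ≤ (1 + -x⁻¹) ^ j * x ^ j := by gcongr; exact one_add_mul_le_pow (by linarith) j
    _ = (x - 1) ^ j := by
        rw [← mul_pow, one_add_mul, neg_mul, inv_mul_cancel₀ hx₀.ne', sub_eq_add_neg]

lemma exists_nat_lt_and_sub_one_le {x : ℝ} (hx : 0 < x) : ∃ d : ℕ, (d : ℝ) < x ∧ x - 1 ≤ d := by
  obtain ⟨d, hd⟩ := Nat.exists_eq_add_one.2 (Nat.ceil_pos.2 hx)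
  refine ⟨d, Nat.lt_ceil.1 (by omega), ?_⟩
  have := Nat.le_ceil x
  rw [hd, Nat.cast_add_one] at this
  linarith

lemma exists_nat_add_two_le_and_half_le {x : ℝ} (hx : 6 ≤ x) :
    ∃ s : ℕ, (s : ℝ) + 2 ≤ x ∧ x / 2 ≤ s := by
  obtain ⟨s, hsx, hxs⟩ := exists_nat_lt_and_sub_one_le (x := x - 2) (by linarith)
  exact ⟨s, by linarith, by linarith⟩

variable {d m n : ℕ} {c D : ℝ}

lemma exists_nat_add_mul_le_pow (hc : 0 < c) (hD₀ : 0 < D) (hD : D ^ m = n)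
    (hcD : 10 * (m + 1) ≤ c * D) (hAD : 30 ≤ c ^ (m + 1) * D) (hd : c * D - 1 ≤ d) :
    ∃ e s : ℕ, e + (s + 2) * n ≤ d ^ (m + 1) ∧
      7 / 10 * c ^ (m + 1) * D ^ (m + 1) ≤ e ∧ c ^ (m + 1) / 10 * D ≤ s := by
  obtain ⟨s, hsD, hDs⟩ := exists_nat_add_two_le_and_half_le (x := c ^ (m + 1) * D / 5)
    (by linarith)
  have hcD_one : 1 ≤ c * D := by linarith [m.cast_nonneg (α := ℝ)]
  have hpow : 9 / 10 * (c ^ (m + 1) * D ^ (m + 1)) ≤ (d : ℝ) ^ (m + 1) :=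
    calc 9 / 10 * (c ^ (m + 1) * D ^ (m + 1)) = 9 / 10 * (c * D) ^ (m + 1) := by rw [mul_pow]
      _ ≤ (c * D - 1) ^ (m + 1) :=
        nine_tenths_mul_pow_le_sub_one_pow hcD_one (by exact_mod_cast hcD)
      _ ≤ (d : ℝ) ^ (m + 1) := by gcongr
  have hloss : ((s : ℝ) + 2) * n ≤ 2 / 10 * (c ^ (m + 1) * D ^ (m + 1)) :=
    calc ((s : ℝ) + 2) * n ≤ c ^ (m + 1) * D / 5 * D ^ m := by rw [hD]; gcongr
      _ = 2 / 10 * (c ^ (m + 1) * D ^ (m + 1)) := by ring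
  have hle : (s + 2) * n ≤ d ^ (m + 1) := by
    have : 0 < c ^ (m + 1) * D ^ (m + 1) := by positivity
    have : ((s : ℝ) + 2) * n ≤ (d : ℝ) ^ (m + 1) := by linarith
    exact_mod_cast this
  refine ⟨d ^ (m + 1) - (s + 2) * n, s, (Nat.sub_add_cancel hle).le, ?_, by linarith⟩
  push_cast [Nat.cast_sub hle]
  linarith

lemma pow_le_ten_ninths (hD : 0 < D) (hcD : 10 * (m + 1) ≤ c * D)
    (hpow : (c * D - 1) ^ m ≤ D ^ m) : c ^ m ≤ 10 / 9 := by
  have hcD_one : 1 ≤ c * D := by linarith [m.cast_nonneg (α := ℝ)]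
  have : 9 / 10 * c ^ m * D ^ m ≤ 1 * D ^ m :=
    calc 9 / 10 * c ^ m * D ^ m = 9 / 10 * (c * D) ^ m := by rw [mul_pow, mul_assoc]
      _ ≤ (c * D - 1) ^ m := nine_tenths_mul_pow_le_sub_one_pow hcD_one (by linarith)
      _ ≤ 1 * D ^ m := by rwa [one_mul]
  linarith [le_of_mul_le_mul_right this (by positivity)]

/- Here `D` is `n ^ (1 / m)`, and the cycle length is `2ℓ` for `ℓ = m + (i + 1)`. -/
lemma le_cycleCount_of_mul_le_degree {V : Type*} [Fintype V] [DecidableEq V] [Nonempty V]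
    {G : SimpleGraph V} [DecidableRel G.Adj] {i : ℕ} (C : G.Coloring Bool)
    (hg : ((2 * m : ℕ) : ℕ∞) < G.egirth) (hc : 0 < c) (hD₀ : 0 < D)
    (hD : D ^ m = Fintype.card V) (hcD : 10 * (m + 1) ≤ c * D) (hAD : 30 ≤ c ^ (m + 1) * D)
    (hdeg : ∀ x, c * D ≤ G.degree x) (hi : i + 1 ≤ m) :
    9 / (2 * (m + (i + 1) : ℕ) * c) * (c ^ (m + 1) / 10) ^ (2 * (i + 1) + 1)
      * D ^ (2 * (m + (i + 1))) ≤ cycleCount G (2 * (m + (i + 1))) := by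
  obtain ⟨d, hdc, hcd⟩ := exists_nat_lt_and_sub_one_le (mul_pos hc hD₀)
  have hd (x : V) : d + 1 ≤ G.degree x := by exact_mod_cast hdc.trans_le (hdeg x)
  obtain ⟨e, s, hpow, he, hs⟩ := exists_nat_add_mul_le_pow hc hD₀ hD hcD hAD hcd
  have hcount := card_mul_mul_pow_le_cycleCount C hg hd hpow hi
  have hcD_one : 1 ≤ c * D := by linarith [m.cast_nonneg (α := ℝ)]
  have hcm : c ^ m ≤ 10 / 9 := pow_le_ten_ninths hD₀ hcD <|
    calc (c * D - 1) ^ m ≤ (d : ℝ) ^ m := by gcongr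
      _ ≤ D ^ m := by rw [hD]; exact_mod_cast pow_le_card C hg hd
  set ℓ := m + (i + 1) with hℓ
  have hℓ₀ : (0 : ℝ) < ℓ := by rw [hℓ]; positivity
  set X := (c ^ (m + 1) / 10) ^ (2 * i + 1) * c ^ (m + 1) * D ^ (2 * ℓ) with hX
  have hmain : 7 / 10 * X ≤ 4 * ℓ * cycleCount G (2 * ℓ) :=
    calc 7 / 10 * X = D ^ m * (7 / 10 * c ^ (m + 1) * D ^ (m + 1) *
          (c ^ (m + 1) / 10 * D) ^ (2 * i + 1)) := by
          rw [hX, hℓ]; ring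
      _ ≤ D ^ m * (e * (s : ℝ) ^ (2 * i + 1)) := by gcongr
      _ ≤ 2 * (2 * ℓ) * cycleCount G (2 * ℓ) := by rw [hD]; exact_mod_cast hcount
      _ = 4 * ℓ * cycleCount G (2 * ℓ) := by ring
  refine le_of_mul_le_mul_left ?_ (by positivity : 0 < 4 * (ℓ : ℝ))
  calc 4 * ℓ * (9 / (2 * ℓ * c) * (c ^ (m + 1) / 10) ^ (2 * (i + 1) + 1) * D ^ (2 * ℓ))
      = 18 / 100 * c ^ m * X := by rw [hX]; field_simp; ring
    _ ≤ 7 / 10 * X := by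
        have : 0 ≤ X := by positivity
        gcongr
        linarith
    _ ≤ 4 * ℓ * cycleCount G (2 * ℓ) := hmain

end Asymptotics

end ShortCycles

open ShortCycles Filter

theorem many_short_cycles_general.{u} (m : ℕ) (hm : m ≠ 0) (c : ℝ) (hc : 0 < c) :
    ∃ N : ℕ, ∀ (V : Type u) [Fintype V] [DecidableEq V] (G : SimpleGraph V) (n : ℕ),
      Fintype.card V = n → N ≤ n → G.IsBip → (2 * m : ℕ) < G.egirth →
      (∀ v : V, c * (n : ℝ) ^ ((1 : ℝ) / m) ≤ ((G.neighborSet v).ncard : ℝ)) →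
      ∀ ℓ : ℕ, m + 1 ≤ ℓ → ℓ ≤ 2 * m →
        (9 / (2 * ℓ * c)) * (c ^ (m + 1) / 10) ^ (2 * ℓ - 2 * m + 1)
            * (n : ℝ) ^ ((2 * ℓ : ℝ) / m)
          ≤ (cycleCount G (2 * ℓ) : ℝ) := by
  classical
  have hroot : Tendsto (fun n : ℕ ↦ (n : ℝ) ^ ((1 : ℝ) / m)) atTop atTop :=
    (tendsto_rpow_atTop (by positivity)).comp tendsto_natCast_atTop_atTop
  obtain ⟨N, hN⟩ := eventually_atTop.1 ((eventually_gt_atTop 0).and <|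
    ((hroot.const_mul_atTop hc).eventually_ge_atTop (10 * (m + 1))).and
      ((hroot.const_mul_atTop (pow_pos hc (m + 1))).eventually_ge_atTop 30))
  refine ⟨N, fun V _ _ G n hn hNn hbip hg hdeg ℓ hmℓ hℓm ↦ ?_⟩
  obtain ⟨hn₀, hcD, hAD⟩ := hN n hNn
  obtain ⟨C⟩ := nonempty_coloring_of_isBip hbip
  have : Nonempty V := Fintype.card_pos_iff.1 (hn ▸ hn₀)
  obtain ⟨i, rfl⟩ : ∃ i, ℓ = m + (i + 1) := ⟨ℓ - m - 1, by omega⟩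
  have hpow (j : ℕ) : ((n : ℝ) ^ ((1 : ℝ) / m)) ^ j = (n : ℝ) ^ ((j : ℝ) / m) := by
    rw [← rpow_mul_natCast n.cast_nonneg, one_div_mul_eq_div]
  have hcycles := le_cycleCount_of_mul_le_degree (i := i) C hg hc
    (D := (n : ℝ) ^ ((1 : ℝ) / m)) (rpow_pos_of_pos (Nat.cast_pos.2 hn₀) _)
    (by rw [hpow, div_self (Nat.cast_ne_zero.2 hm), rpow_one, hn]) hcD hAD
    (fun x ↦ by simpa [← coe_neighborFinset, Set.ncard_coe_finset] using hdeg x) (by omega)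
  rw [hpow] at hcycles
  rw [show 2 * (m + (i + 1)) - 2 * m + 1 = 2 * (i + 1) + 1 by omega]
  exact_mod_cast hcycles

/-- Let `m ≥ 2` and `c₁, c₂ > 0`. For `n` sufficiently large, every bipartite graph
`G` on `n` vertices with girth greater than `2m` and `c₁·n^{1/m} ≤ deg(v) ≤ c₂·n^{1/m}`
for all `v` has, for every `m+1 ≤ ℓ ≤ 2m`, at least `α_ℓ·n^{2ℓ/m}` cycles of length
`2ℓ`, where `α_ℓ = (9/(2ℓ·c₂))·(c₁^{m+1}/10)^{2ℓ−2m+1}`. -/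
theorem many_short_cycles (m : ℕ) (hm : 2 ≤ m) (c₁ c₂ : ℝ) (hc₁ : 0 < c₁) (hc₂ : 0 < c₂) :
    ∃ N : ℕ, ∀ (V : Type) [Fintype V] [DecidableEq V] (G : SimpleGraph V) (n : ℕ),
      Fintype.card V = n → N ≤ n → G.IsBip → (2 * m : ℕ) < G.egirth →
      (∀ v : V, c₁ * (n : ℝ) ^ ((1 : ℝ) / m) ≤ ((G.neighborSet v).ncard : ℝ) ∧
        ((G.neighborSet v).ncard : ℝ) ≤ c₂ * (n : ℝ) ^ ((1 : ℝ) / m)) →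
      ∀ ℓ : ℕ, m + 1 ≤ ℓ → ℓ ≤ 2 * m →
        (9 / (2 * ℓ * c₂)) * (c₁ ^ (m + 1) / 10) ^ (2 * ℓ - 2 * m + 1)
            * (n : ℝ) ^ ((2 * ℓ : ℝ) / m)
          ≤ (cycleCount G (2 * ℓ) : ℝ) := by
  obtain ⟨N, hN⟩ := many_short_cycles_general m (by omega) c₁ hc₁
  refine ⟨max N 1, fun V _ _ G n hn hNn hbip hg hdeg ℓ hmℓ hℓm ↦ ?_⟩
  have hn₀ : 0 < n := (Nat.le_max_right N 1).trans hNn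
  obtain ⟨v⟩ : Nonempty V := Fintype.card_pos_iff.1 (hn ▸ hn₀)
  have hc : c₁ ≤ c₂ := le_of_mul_le_mul_right ((hdeg v).1.trans (hdeg v).2)
    (rpow_pos_of_pos (Nat.cast_pos.2 hn₀) _)
  refine le_trans ?_ (hN V G n hn ((Nat.le_max_left N 1).trans hNn) hbip hg
    (fun v ↦ (hdeg v).1) ℓ hmℓ hℓm)
  have : 0 < ℓ := by omega
  gcongr
end

section
/- For every real c > 0 and integers M > m ≥ 2 there exist α > 0 and N such that: if G is a graph on n ≥ N vertices with at least c·n^{1+1/m} edges and girth greater than 2m, then for every ℓ with m+1 ≤ ℓ ≤ M, the number of cycles of length 2ℓ in G is at least α·n^{2ℓ/m}. -/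
open SimpleGraph Real

/-!
Some induced subgraph has minimum degree at least `e(G) / n`, which is of order `t = n ^ (1 / m)`,
so it suffices to work inside a graph with at most `t ^ m` vertices and minimum degree `δ` of order
`t`. Girth greater than `2m` means that two vertices are joined by at most one path of each length
at most `m`. Counting the paths of length `m` out of a vertex of maximum degree `Δ` gives
`Δ (δ - m) ^ (m - 1) ≤ t ^ m`, so `Δ` is of order `t` as well. Moreover, of a path of length `l`
with prescribed ends only the first `l - m` steps are free, so there are at most `Δ ^ (l - m)` such
paths, and those through a given third vertex number only `O(Δ ^ (l - m - 1))`.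

There are at least `n (δ - l) ^ l` paths of length `l`, so by Cauchy–Schwarz there are of order
`t ^ (2l)` pairs of them with common ends. All but `O(t ^ (2l - 1))` of these pairs are internally
disjoint, hence close up to cycles of length `2l`, and each cycle arises boundedly often.
-/

open Finset Filter

universe u

section PathCounting

variable {V : Type*} {G : SimpleGraph V}

lemma eq_of_isPath_of_length_add_length_lt_egirth {x y : V} {p q : G.Walk x y} (hp : p.IsPath)
    (hq : q.IsPath) (h : ((p.length + q.length : ℕ) : ℕ∞) < G.egirth) : p = q := by
  by_contra hpq
  obtain ⟨w, -, -, c, hc, hlen⟩ := hp.exists_isCycle_length_le_add_of_ne hq hpq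
  exact (h.trans_le (egirth_le_length hc)).not_ge (mod_cast hlen)

variable [Fintype V] [DecidableEq V] [DecidableRel G.Adj]

variable (G) in
/-- The paths of length `k` from `x` to `y` in `G`. -/
def pathFinset (k : ℕ) (x y : V) : Finset (G.Walk x y) :=
  {p ∈ G.finsetWalkLength k x y | p.IsPath}

lemma mem_pathFinset {k : ℕ} {x y : V} {p : G.Walk x y} :
    p ∈ pathFinset G k x y ↔ p.length = k ∧ p.IsPath := by
  rw [pathFinset, mem_filter, mem_finsetWalkLength_iff]

lemma card_pathFinset_le_one {k : ℕ} (hG : ((2 * k : ℕ) : ℕ∞) < G.egirth) (x y : V) :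
    #(pathFinset G k x y) ≤ 1 := by
  refine card_le_one.2 fun p hp q hq ↦ ?_
  rw [mem_pathFinset] at hp hq
  refine eq_of_isPath_of_length_add_length_lt_egirth hp.2 hq.2 ?_
  rwa [hp.1, hq.1, ← two_mul]

variable (G) in
lemma card_pathFinset_succ (k : ℕ) (x y : V) :
    #(pathFinset G (k + 1) x y) =
      ∑ w ∈ G.neighborFinset x, #{p ∈ pathFinset G k w y | x ∉ p.support} := by
  rw [← card_sigma]
  refine (card_bij
    (fun a ha ↦ Walk.cons ((G.mem_neighborFinset x a.1).1 (mem_sigma.1 ha).1) a.2) ?_ ?_ ?_).symm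
  · rintro ⟨w, p⟩ hp
    simp only [mem_sigma, mem_filter, mem_pathFinset] at hp
    simp [mem_pathFinset, Walk.cons_isPath_iff, hp.2]
  · rintro ⟨w, p⟩ hp ⟨w', p'⟩ hp' h
    cases h
    rfl
  · rintro (_ | ⟨h, p⟩) hp
    · simp [mem_pathFinset] at hp
    · refine ⟨⟨_, p⟩, ?_, rfl⟩
      simp_all [mem_pathFinset, Walk.cons_isPath_iff]

lemma card_pathFinset_le_maxDegree_pow {m : ℕ} (hG : ((2 * m : ℕ) : ℕ∞) < G.egirth) (k : ℕ)
    (x y : V) : #(pathFinset G k x y) ≤ G.maxDegree ^ (k - m) := by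
  have card_le_one_of_le {j : ℕ} (hj : j ≤ m) (x : V) :
      #(pathFinset G j x y) ≤ G.maxDegree ^ (j - m) := by
    rw [Nat.sub_eq_zero_of_le hj, pow_zero]
    exact card_pathFinset_le_one (lt_of_le_of_lt (mod_cast by omega) hG) x y
  induction k generalizing x with
  | zero => exact card_le_one_of_le (Nat.zero_le m) x
  | succ k ih =>
    obtain hkm | hkm := le_or_gt (k + 1) m
    · exact card_le_one_of_le hkm x
    calc #(pathFinset G (k + 1) x y)
        = ∑ w ∈ G.neighborFinset x, #{p ∈ pathFinset G k w y | x ∉ p.support} :=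
          card_pathFinset_succ G k x y
      _ ≤ ∑ _w ∈ G.neighborFinset x, G.maxDegree ^ (k - m) :=
          sum_le_sum fun w _ ↦ (card_filter_le _ _).trans (ih w)
      _ = G.degree x * G.maxDegree ^ (k - m) := by
          rw [sum_const, smul_eq_mul, card_neighborFinset_eq_degree]
      _ ≤ G.maxDegree * G.maxDegree ^ (k - m) := by gcongr; exact G.degree_le_maxDegree x
      _ = G.maxDegree ^ (k + 1 - m) := by
          rw [← pow_succ', Nat.sub_add_comm (Nat.le_of_lt_succ hkm)]

lemma degree_sub_length_le_card_neighborFinset_sdiff_support {w y : V} (p : G.Walk w y) :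
    G.degree w - p.length ≤ #(G.neighborFinset w \ p.support.toFinset) := by
  have subset_tail : p.support.toFinset ∩ G.neighborFinset w ⊆ p.support.tail.toFinset := by
    intro v hv
    rw [mem_inter, List.mem_toFinset, mem_neighborFinset] at hv
    exact List.mem_toFinset.2 ((p.mem_support_iff.1 hv.1).resolve_left hv.2.ne')
  have card_inter_le : #(p.support.toFinset ∩ G.neighborFinset w) ≤ p.length :=
    (card_le_card subset_tail).trans ((List.toFinset_card_le _).trans (by simp))
  rw [card_sdiff, card_neighborFinset_eq_degree]
  omega

variable (G) in
lemma sum_card_pathFinset_mul_le (k : ℕ) (y : V) :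
    (∑ w, #(pathFinset G k w y)) * (G.minDegree - k) ≤ ∑ x, #(pathFinset G (k + 1) x y) :=
  calc (∑ w, #(pathFinset G k w y)) * (G.minDegree - k)
      = ∑ w, ∑ _p ∈ pathFinset G k w y, (G.minDegree - k) := by
        simp_rw [sum_mul, sum_const, smul_eq_mul]
    _ ≤ ∑ w, ∑ p ∈ pathFinset G k w y, #{x ∈ G.neighborFinset w | x ∉ p.support} := by
        refine sum_le_sum fun w _ ↦ sum_le_sum fun p hp ↦ ?_
        have hsdiff := degree_sub_length_le_card_neighborFinset_sdiff_support p
        rw [(mem_pathFinset.1 hp).1] at hsdiff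
        refine (Nat.sub_le_sub_right (G.minDegree_le_degree w) k).trans (hsdiff.trans_eq ?_)
        congr 1
        ext x
        simp
    _ = ∑ w, ∑ x ∈ G.neighborFinset w, #{p ∈ pathFinset G k w y | x ∉ p.support} :=
        sum_congr rfl fun w _ ↦ sum_card_bipartiteAbove_eq_sum_card_bipartiteBelow _
    _ = ∑ x, ∑ w ∈ G.neighborFinset x, #{p ∈ pathFinset G k w y | x ∉ p.support} :=
        sum_comm' (by simp [G.adj_comm])
    _ = ∑ x, #(pathFinset G (k + 1) x y) := by simp_rw [card_pathFinset_succ]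

variable (G) in
lemma degree_mul_pow_le_sum_card_pathFinset (k : ℕ) (y : V) :
    G.degree y * (G.minDegree - k) ^ k ≤ ∑ x, #(pathFinset G (k + 1) x y) := by
  induction k with
  | zero =>
    have card_pathFinset_one : ∀ x, (if G.Adj y x then 1 else 0) ≤ #(pathFinset G 1 x y) := by
      intro x
      split_ifs with h
      · exact card_pos.2 ⟨h.symm.toWalk, by simp [mem_pathFinset, h.ne']⟩
      · exact Nat.zero_le _
    calc G.degree y * (G.minDegree - 0) ^ 0 = ∑ x, if G.Adj y x then 1 else 0 := by
          rw [pow_zero, mul_one, ← card_neighborFinset_eq_degree, neighborFinset_eq_filter,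
            card_filter]
      _ ≤ ∑ x, #(pathFinset G 1 x y) := sum_le_sum fun x _ ↦ card_pathFinset_one x
  | succ k ih =>
    calc G.degree y * (G.minDegree - (k + 1)) ^ (k + 1)
        ≤ G.degree y * (G.minDegree - k) ^ k * (G.minDegree - (k + 1)) := by
          rw [pow_succ, ← mul_assoc]
          gcongr
          omega
      _ ≤ (∑ x, #(pathFinset G (k + 1) x y)) * (G.minDegree - (k + 1)) := by gcongr
      _ ≤ ∑ x, #(pathFinset G (k + 2) x y) := sum_card_pathFinset_mul_le G (k + 1) y

omit [DecidableEq V] in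
lemma maxDegree_mul_pow_le_card {k : ℕ} (hG : ((2 * (k + 1) : ℕ) : ℕ∞) < G.egirth) :
    G.maxDegree * (G.minDegree - k) ^ k ≤ Fintype.card V := by
  classical
  cases isEmpty_or_nonempty V
  · simp
  obtain ⟨y, hy⟩ := G.exists_maximal_degree_vertex
  calc G.maxDegree * (G.minDegree - k) ^ k ≤ ∑ x, #(pathFinset G (k + 1) x y) :=
        hy ▸ degree_mul_pow_le_sum_card_pathFinset G k y
    _ ≤ ∑ _x : V, 1 := sum_le_sum fun x _ ↦ card_pathFinset_le_one hG x y
    _ = Fintype.card V := by simp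

lemma card_filter_mem_support_le_sum (l : ℕ) {x y w : V} (hwx : w ≠ x) (hwy : w ≠ y) :
    #{q ∈ pathFinset G l x y | w ∈ q.support} ≤
      ∑ j ∈ Ioo 0 l, #(pathFinset G j x w) * #(pathFinset G (l - j) w y) := by
  simp_rw [← card_product]
  rw [← card_sigma]
  refine card_le_card_of_surjOn (fun a ↦ a.2.1.append a.2.2) fun q hq ↦ ?_
  obtain ⟨hq, hw⟩ := mem_filter.1 (mem_coe.1 hq)
  obtain ⟨rfl, hpath⟩ := mem_pathFinset.1 hq
  have htake := Walk.length_takeUntil_lt_length hw hwy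
  have hdrop := Walk.length_dropUntil_lt_length hw hwx
  have hlen : (q.takeUntil w hw).length + (q.dropUntil w hw).length = q.length := by
    rw [← Walk.length_append, q.take_spec]
  refine ⟨⟨(q.takeUntil w hw).length, q.takeUntil w hw, q.dropUntil w hw⟩, ?_, q.take_spec hw⟩
  simp only [coe_sigma, Set.mem_sigma_iff, mem_coe, mem_Ioo, mem_product, mem_pathFinset]
  exact ⟨by omega, ⟨trivial, hpath.takeUntil hw⟩, by omega, hpath.dropUntil hw⟩

lemma card_filter_mem_support_le {m l : ℕ} (hm : 0 < m) (hl : m < l)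
    (hG : ((2 * m : ℕ) : ℕ∞) < G.egirth) (hΔ : 0 < G.maxDegree) {x y w : V} (hwx : w ≠ x)
    (hwy : w ≠ y) :
    #{q ∈ pathFinset G l x y | w ∈ q.support} ≤ l * G.maxDegree ^ (l - m - 1) := by
  have term_le : ∀ j ∈ Ioo 0 l,
      #(pathFinset G j x w) * #(pathFinset G (l - j) w y) ≤ G.maxDegree ^ (l - m - 1) := by
    intro j hj
    rw [mem_Ioo] at hj
    calc #(pathFinset G j x w) * #(pathFinset G (l - j) w y)
        ≤ G.maxDegree ^ (j - m) * G.maxDegree ^ (l - j - m) :=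
          Nat.mul_le_mul (card_pathFinset_le_maxDegree_pow hG j x w)
            (card_pathFinset_le_maxDegree_pow hG (l - j) w y)
      _ = G.maxDegree ^ (j - m + (l - j - m)) := (pow_add _ _ _).symm
      _ ≤ G.maxDegree ^ (l - m - 1) := Nat.pow_le_pow_right hΔ (by omega)
  calc #{q ∈ pathFinset G l x y | w ∈ q.support}
      ≤ ∑ j ∈ Ioo 0 l, #(pathFinset G j x w) * #(pathFinset G (l - j) w y) :=
        card_filter_mem_support_le_sum l hwx hwy
    _ ≤ #(Ioo 0 l) * G.maxDegree ^ (l - m - 1) := sum_le_card_nsmul _ _ _ term_le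
    _ ≤ l * G.maxDegree ^ (l - m - 1) := by gcongr; simp

end PathCounting

section DisjointPaths

variable {V : Type*} {G : SimpleGraph V}

/-- Two walks from `x` to `y` are internally disjoint if they share no vertex other than `x` and
`y`. Two internally disjoint paths of length `l ≥ 2` close up to a cycle of length `2 * l`. -/
def InternallyDisjoint {x y : V} (p q : G.Walk x y) : Prop :=
  ∀ w ∈ p.support, w ∈ q.support → w = x ∨ w = y

lemma isCycle_append_reverse {x y : V} {p q : G.Walk x y} (hp : p.IsPath) (hq : q.IsPath)
    (hpq : InternallyDisjoint p q) (hlen : 1 < p.length) : (p.append q.reverse).IsCycle := by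
  refine hp.isCycle_append hq.reverse (fun w hwp hwq ↦ ?_) (Or.inl hlen)
  have hx := p.cons_tail_support ▸ hp.support_nodup
  have hy := q.reverse.cons_tail_support ▸ hq.reverse.support_nodup
  rcases hpq w (List.mem_of_mem_tail hwp)
    (by simpa using List.mem_of_mem_tail hwq) with rfl | rfl
  · exact (List.nodup_cons.1 hx).1 hwp
  · exact (List.nodup_cons.1 hy).1 hwq

variable [Fintype V] [DecidableEq V] [DecidableRel G.Adj]

open Classical in
variable (G) in
/-- The ordered pairs of internally disjoint paths of length `l` from `x` to `y`. -/
noncomputable def disjointPathPairs (l : ℕ) (x y : V) : Finset (G.Walk x y × G.Walk x y) :=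
  {a ∈ pathFinset G l x y ×ˢ pathFinset G l x y | InternallyDisjoint a.1 a.2}

lemma mem_disjointPathPairs {l : ℕ} {x y : V} {a : G.Walk x y × G.Walk x y} :
    a ∈ disjointPathPairs G l x y ↔ (a.1.length = l ∧ a.1.IsPath) ∧
      (a.2.length = l ∧ a.2.IsPath) ∧ InternallyDisjoint a.1 a.2 := by
  simp only [disjointPathPairs, mem_filter, mem_product, mem_pathFinset, and_assoc]

open Classical in
lemma card_filter_not_internallyDisjoint_le {m l : ℕ} (hm : 0 < m) (hl : m < l)
    (hG : ((2 * m : ℕ) : ℕ∞) < G.egirth) (hΔ : 0 < G.maxDegree) {x y : V} {p : G.Walk x y}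
    (hp : p.length = l) :
    #{q ∈ pathFinset G l x y | ¬ InternallyDisjoint p q} ≤
      l ^ 2 * G.maxDegree ^ (l - m - 1) := by
  let W := {w ∈ p.support.tail.toFinset | w ≠ x ∧ w ≠ y}
  have subset_biUnion : {q ∈ pathFinset G l x y | ¬ InternallyDisjoint p q} ⊆
      W.biUnion fun w ↦ {q ∈ pathFinset G l x y | w ∈ q.support} := by
    intro q hq
    obtain ⟨hql, hpq⟩ := mem_filter.1 hq
    simp only [InternallyDisjoint, not_forall, not_or] at hpq
    obtain ⟨w, hwp, hwq, hwx, hwy⟩ := hpq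
    have hwtail := (p.mem_support_iff.1 hwp).resolve_left hwx
    exact mem_biUnion.2 ⟨w, by simp [W, hwx, hwy, hwtail], mem_filter.2 ⟨hql, hwq⟩⟩
  have card_W_le : #W ≤ l :=
    (card_filter_le _ _).trans ((List.toFinset_card_le _).trans (by simp [hp]))
  calc #{q ∈ pathFinset G l x y | ¬ InternallyDisjoint p q}
      ≤ #(W.biUnion fun w ↦ {q ∈ pathFinset G l x y | w ∈ q.support}) :=
        card_le_card subset_biUnion
    _ ≤ #W * (l * G.maxDegree ^ (l - m - 1)) :=
        card_biUnion_le_card_mul _ _ _ fun w hw ↦ by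
          obtain ⟨hwx, hwy⟩ := (mem_filter.1 hw).2
          exact card_filter_mem_support_le hm hl hG hΔ hwx hwy
    _ ≤ l * (l * G.maxDegree ^ (l - m - 1)) := by gcongr
    _ = l ^ 2 * G.maxDegree ^ (l - m - 1) := by ring

lemma sq_card_pathFinset_le {m l : ℕ} (hm : 0 < m) (hl : m < l)
    (hG : ((2 * m : ℕ) : ℕ∞) < G.egirth) (hΔ : 0 < G.maxDegree) (x y : V) :
    #(pathFinset G l x y) ^ 2 ≤
      #(disjointPathPairs G l x y) + l ^ 2 * G.maxDegree ^ (2 * (l - m) - 1) := by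
  classical
  have card_not_disjoint_le :
      #{a ∈ pathFinset G l x y ×ˢ pathFinset G l x y | ¬ InternallyDisjoint a.1 a.2} ≤
        l ^ 2 * G.maxDegree ^ (2 * (l - m) - 1) :=
    calc #{a ∈ pathFinset G l x y ×ˢ pathFinset G l x y | ¬ InternallyDisjoint a.1 a.2}
        = ∑ p ∈ pathFinset G l x y, #{q ∈ pathFinset G l x y | ¬ InternallyDisjoint p q} := by
          simp_rw [card_filter, sum_product]
      _ ≤ #(pathFinset G l x y) * (l ^ 2 * G.maxDegree ^ (l - m - 1)) :=
          sum_le_card_nsmul _ _ _ fun p hp ↦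
            card_filter_not_internallyDisjoint_le hm hl hG hΔ (mem_pathFinset.1 hp).1
      _ ≤ G.maxDegree ^ (l - m) * (l ^ 2 * G.maxDegree ^ (l - m - 1)) := by
          gcongr
          exact card_pathFinset_le_maxDegree_pow hG l x y
      _ = l ^ 2 * G.maxDegree ^ (l - m + (l - m - 1)) := by ring
      _ = l ^ 2 * G.maxDegree ^ (2 * (l - m) - 1) := by congr 2; omega
  rw [sq, ← card_product, ← card_filter_add_card_filter_not (fun a ↦ InternallyDisjoint a.1 a.2)]
  exact Nat.add_le_add_left card_not_disjoint_le _

end DisjointPaths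

section Cycles

variable {V : Type*} {G : SimpleGraph V}

lemma sigma_walk_ext_getVert {L : ℕ} {a b : Σ u, G.Walk u u} (ha : a.2.length = L)
    (hb : b.2.length = L) (h : ∀ i ≤ L, a.2.getVert i = b.2.getVert i) : a = b := by
  obtain ⟨u, w⟩ := a
  obtain ⟨v, w'⟩ := b
  obtain rfl : u = v := by simpa using h 0 (Nat.zero_le L)
  congr
  exact Walk.ext_getVert_le_length (ha.trans hb.symm) fun i hi ↦ h i (hi.trans_eq ha)

variable [Fintype V] [DecidableEq V] [DecidableRel G.Adj]

open Classical in
variable (G) in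
/-- The closed walks of length `L` in `G` that trace a cycle; each cycle subgraph of length `L`
occurs once for every choice of a base point and an orientation. -/
noncomputable def cycleFinset (L : ℕ) : Finset (Σ u, G.Walk u u) :=
  univ.sigma fun u ↦ {w ∈ G.finsetWalkLength L u u | w.IsCycle}

lemma mem_cycleFinset {L : ℕ} {a : Σ u, G.Walk u u} :
    a ∈ cycleFinset G L ↔ a.2.length = L ∧ a.2.IsCycle := by
  simp [cycleFinset, mem_finsetWalkLength_iff]

lemma card_filter_cycleFinset_edges_le (L : ℕ) (s : Finset (Sym2 V)) :
    #{a ∈ cycleFinset G L | a.2.edges.toFinset = s} ≤ (L + 1) ^ (L + 1) := by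
  obtain hempty | ⟨a₀, ha₀⟩ := {a ∈ cycleFinset G L | a.2.edges.toFinset = s}.eq_empty_or_nonempty
  · simp [hempty]
  rw [mem_filter, mem_cycleFinset] at ha₀
  obtain ⟨⟨hlen₀, hcycle₀⟩, hedges₀⟩ := ha₀
  let U := a₀.2.support.toFinset
  have card_U_le : #U ≤ L + 1 := (List.toFinset_card_le _).trans (by simp [hlen₀])
  have support_subset : ∀ a ∈ cycleFinset G L, a.2.edges.toFinset = s →
      ∀ v ∈ a.2.support, v ∈ U := by
    intro a ha hedges v hv
    obtain ⟨e, he, hve⟩ :=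
      (Walk.mem_support_iff_exists_mem_edges_of_not_nil (mem_cycleFinset.1 ha).2.not_nil).1 hv
    refine List.mem_toFinset.2
      ((Walk.mem_support_iff_exists_mem_edges_of_not_nil hcycle₀.not_nil).2 ⟨e, ?_, hve⟩)
    rwa [← List.mem_toFinset, hedges₀, ← hedges, List.mem_toFinset]
  calc #{a ∈ cycleFinset G L | a.2.edges.toFinset = s}
      ≤ #(Fintype.piFinset fun _ : Fin (L + 1) ↦ U) := by
        refine card_le_card_of_injOn (fun a i ↦ a.2.getVert i) (fun a ha ↦ ?_)
          fun a ha b hb hab ↦ ?_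
        · obtain ⟨hcycle, hedges⟩ := mem_filter.1 ha
          exact Fintype.mem_piFinset.2 fun i ↦
            support_subset a hcycle hedges _ (a.2.getVert_mem_support i)
        · refine sigma_walk_ext_getVert (mem_cycleFinset.1 (mem_filter.1 ha).1).1
            (mem_cycleFinset.1 (mem_filter.1 hb).1).1 fun i hi ↦ ?_
          exact congrFun hab ⟨i, Nat.lt_succ_of_le hi⟩
    _ = #U ^ (L + 1) := by simp
    _ ≤ (L + 1) ^ (L + 1) := by gcongr

variable (G) in
lemma card_cycleFinset_le (L : ℕ) :
    #(cycleFinset G L) ≤ (L + 1) ^ (L + 1) * cycleCount G L := by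
  have cycleCount_eq :
      cycleCount G L = #((cycleFinset G L).image fun a ↦ a.2.edges.toFinset) := by
    rw [cycleCount, ← Nat.card_eq_finsetCard]
    refine Nat.card_congr (Equiv.subtypeEquivRight fun s ↦ ?_)
    simp [mem_cycleFinset, and_assoc, and_left_comm]
  rw [cycleCount_eq]
  exact card_le_mul_card_image _ _ fun s _ ↦ card_filter_cycleFinset_edges_le L s

variable (G) in
lemma sum_card_disjointPathPairs_le {l : ℕ} (hl : 1 < l) :
    ∑ x, ∑ y, #(disjointPathPairs G l x y) ≤ #(cycleFinset G (2 * l)) := by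
  simp_rw [← card_sigma]
  refine card_le_card_of_injOn (fun a ↦ ⟨a.1, a.2.2.1.append a.2.2.2.reverse⟩) ?_ ?_
  · rintro ⟨x, y, p, q⟩ h
    simp only [coe_sigma, Set.mem_sigma_iff, mem_coe, mem_disjointPathPairs] at h
    obtain ⟨-, -, ⟨hpl, hp⟩, ⟨hql, hq⟩, hpq⟩ := h
    refine mem_cycleFinset.2 ⟨?_, isCycle_append_reverse hp hq hpq (hpl ▸ hl)⟩
    rw [Walk.length_append, Walk.length_reverse, hpl, hql, two_mul]
  · rintro ⟨x, y, p, q⟩ h ⟨x', y', p', q'⟩ h' heq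
    simp only [coe_sigma, Set.mem_sigma_iff, mem_coe, mem_disjointPathPairs] at h h'
    obtain ⟨-, -, ⟨hpl, -⟩, -⟩ := h
    obtain ⟨-, -, ⟨hpl', -⟩, -⟩ := h'
    obtain rfl : x = x' := congrArg Sigma.fst heq
    have hwalk : p.append q.reverse = p'.append q'.reverse := eq_of_heq (Sigma.mk.inj heq).2
    have hsupport := congrArg Walk.support hwalk
    obtain rfl : y = y' := by
      simpa [Walk.getVert_append, hpl, hpl'] using congrArg (Walk.getVert · l) hwalk
    rw [Walk.support_append, Walk.support_append] at hsupport
    obtain ⟨hp, hq⟩ := List.append_inj hsupport (by simp [hpl, hpl'])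
    obtain rfl := Walk.ext_support hp
    have hreverse : q.reverse = q'.reverse := Walk.ext_support <| by
      rw [← q.reverse.cons_tail_support, ← q'.reverse.cons_tail_support, hq]
    obtain rfl := Walk.reverse_injective hreverse
    rfl

end Cycles

lemma cycleCount_le_of_isContained {V W : Type*} [DecidableEq V] [DecidableEq W] [Finite W]
    {H : SimpleGraph V} {G : SimpleGraph W} (h : H ⊑ G) (L : ℕ) :
    cycleCount H L ≤ cycleCount G L := by
  obtain ⟨f⟩ := h
  have map_isCycle (s : {s : Finset (Sym2 V) // ∃ (u : V) (w : H.Walk u u),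
      w.IsCycle ∧ w.length = L ∧ w.edges.toFinset = s}) :
      ∃ (u : W) (w : G.Walk u u), w.IsCycle ∧ w.length = L ∧
        w.edges.toFinset = s.1.image (Sym2.map f) := by
    obtain ⟨s, u, w, hcycle, hlen, rfl⟩ := s
    refine ⟨f u, w.map f.toHom, hcycle.map f.injective, (w.length_map _).trans hlen, ?_⟩
    ext e
    simp
  refine Nat.card_le_card_of_injective (fun s ↦ ⟨s.1.image (Sym2.map f), map_isCycle s⟩) ?_
  intro s t hst
  exact Subtype.ext (image_injective (Sym2.map.injective f.injective) (Subtype.mk.inj hst))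

section CycleCount

variable {V : Type*} [Fintype V] [DecidableEq V] {G : SimpleGraph V} [DecidableRel G.Adj]

lemma card_mul_minDegree_sub_pow_le_sum_card_pathFinset {l : ℕ} (hl : 0 < l) :
    Fintype.card V * (G.minDegree - l) ^ l ≤ ∑ x, ∑ y, #(pathFinset G l x y) := by
  obtain ⟨k, rfl⟩ := Nat.exists_eq_succ_of_ne_zero hl.ne'
  rw [sum_comm, ← smul_eq_mul, Fintype.card, ← sum_const]
  refine sum_le_sum fun y _ ↦ le_trans ?_ (degree_mul_pow_le_sum_card_pathFinset G k y)
  rw [pow_succ']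
  gcongr
  · exact (Nat.sub_le _ _).trans (G.minDegree_le_degree y)
  · exact Nat.le_succ k

lemma sum_sq_card_pathFinset_le {m l : ℕ} (hm : 0 < m) (hl : m < l)
    (hG : ((2 * m : ℕ) : ℕ∞) < G.egirth) (hΔ : 0 < G.maxDegree) :
    ∑ x, ∑ y, #(pathFinset G l x y) ^ 2 ≤
      (2 * l + 1) ^ (2 * l + 1) * cycleCount G (2 * l) +
        Fintype.card V ^ 2 * (l ^ 2 * G.maxDegree ^ (2 * (l - m) - 1)) :=
  calc ∑ x, ∑ y, #(pathFinset G l x y) ^ 2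
      ≤ ∑ x, ∑ y, (#(disjointPathPairs G l x y) + l ^ 2 * G.maxDegree ^ (2 * (l - m) - 1)) :=
        sum_le_sum fun x _ ↦ sum_le_sum fun y _ ↦ sq_card_pathFinset_le hm hl hG hΔ x y
    _ = ∑ x, ∑ y, #(disjointPathPairs G l x y) +
          Fintype.card V ^ 2 * (l ^ 2 * G.maxDegree ^ (2 * (l - m) - 1)) := by
        simp only [sum_add_distrib, sum_const, card_univ, smul_eq_mul]
        ring
    _ ≤ _ := by
        gcongr
        exact (sum_card_disjointPathPairs_le G (by omega)).trans (card_cycleFinset_le G _)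

lemma minDegree_sub_pow_le [Nonempty V] {m l : ℕ} (hm : 0 < m) (hl : m < l)
    (hG : ((2 * m : ℕ) : ℕ∞) < G.egirth) (hΔ : 0 < G.maxDegree) :
    (G.minDegree - l) ^ (2 * l) ≤ (2 * l + 1) ^ (2 * l + 1) * cycleCount G (2 * l) +
      Fintype.card V ^ 2 * (l ^ 2 * G.maxDegree ^ (2 * (l - m) - 1)) := by
  refine le_trans ?_ (sum_sq_card_pathFinset_le hm hl hG hΔ)
  refine Nat.le_of_mul_le_mul_left ?_ (pow_pos Fintype.card_pos 2 : 0 < Fintype.card V ^ 2)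
  calc Fintype.card V ^ 2 * (G.minDegree - l) ^ (2 * l)
      = (Fintype.card V * (G.minDegree - l) ^ l) ^ 2 := by ring
    _ ≤ (∑ x, ∑ y, #(pathFinset G l x y)) ^ 2 := by
        gcongr
        exact card_mul_minDegree_sub_pow_le_sum_card_pathFinset (by omega)
    _ = (∑ a : V × V, #(pathFinset G l a.1 a.2)) ^ 2 := by rw [Fintype.sum_prod_type]
    _ ≤ #(univ : Finset (V × V)) * ∑ a : V × V, #(pathFinset G l a.1 a.2) ^ 2 :=
        sq_sum_le_card_mul_sum_sq
    _ = Fintype.card V ^ 2 * ∑ x, ∑ y, #(pathFinset G l x y) ^ 2 := by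
        rw [Fintype.sum_prod_type, card_univ, Fintype.card_prod, sq]

end CycleCount

section DenseSubgraph

variable {V : Type*} [Fintype V] [DecidableEq V] {G : SimpleGraph V} [DecidableRel G.Adj]

variable (G) in
lemma card_edgeFinset_inter_sym2_le (S : Finset V) (v : V) :
    #(G.edgeFinset ∩ S.sym2) ≤
      #(G.edgeFinset ∩ (S.erase v).sym2) + #(G.neighborFinset v ∩ S) := by
  have subset_union : G.edgeFinset ∩ S.sym2 ⊆ (G.edgeFinset ∩ (S.erase v).sym2) ∪
      (G.neighborFinset v ∩ S).image (s(v, ·)) := by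
    intro e
    induction e with | h a b => ?_
    intro he
    simp only [mem_inter, mem_edgeFinset, mem_edgeSet, mk_mem_sym2_iff, mem_union, mem_erase,
      mem_image, mem_neighborFinset] at he ⊢
    obtain ⟨hab, ha, hb⟩ := he
    by_cases hav : a = v
    · exact Or.inr ⟨b, ⟨hav ▸ hab, hb⟩, by rw [hav]⟩
    by_cases hbv : b = v
    · exact Or.inr ⟨a, ⟨hbv ▸ hab.symm, ha⟩, by rw [hbv, Sym2.eq_swap]⟩
    · exact Or.inl ⟨hab, ⟨hav, ha⟩, hbv, hb⟩
  refine (card_le_card subset_union).trans ((card_union_le _ _).trans ?_)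
  gcongr
  exact card_image_le

lemma card_edgeFinset_inter_sym2_le_card_mul {d : ℕ}
    (hd : ∀ S : Finset V, S.Nonempty → ∃ v ∈ S, #(G.neighborFinset v ∩ S) ≤ d) (S : Finset V) :
    #(G.edgeFinset ∩ S.sym2) ≤ #S * d := by
  induction S using Finset.strongInduction with
  | H S ih =>
    obtain rfl | hS := S.eq_empty_or_nonempty
    · simp
    obtain ⟨v, hv, hvd⟩ := hd S hS
    calc #(G.edgeFinset ∩ S.sym2)
        ≤ #(G.edgeFinset ∩ (S.erase v).sym2) + #(G.neighborFinset v ∩ S) :=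
          card_edgeFinset_inter_sym2_le G S v
      _ ≤ #(S.erase v) * d + d := Nat.add_le_add (ih _ (erase_ssubset hv)) hvd
      _ = #S * d := by rw [← Nat.succ_mul, Nat.succ_eq_add_one, card_erase_add_one hv]

omit [DecidableEq V] in
variable (G) in
lemma exists_card_edgeFinset_le_mul_minDegree_induce :
    ∃ S : Finset V, #G.edgeFinset ≤ Fintype.card V * (G.induce (S : Set V)).minDegree := by
  classical
  obtain ⟨S, hmax⟩ := Finite.exists_max fun S : Finset V ↦ (G.induce (S : Set V)).minDegree
  refine ⟨S, ?_⟩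
  have exists_degree_le (T : Finset V) (hT : T.Nonempty) :
      ∃ v ∈ T, #(G.neighborFinset v ∩ T) ≤ (G.induce (S : Set V)).minDegree := by
    have : Nonempty (T : Set V) := hT.to_subtype
    obtain ⟨v, hv⟩ := (G.induce (T : Set V)).exists_minimal_degree_vertex
    have hdegree : (G.induce (T : Set V)).degree v = #(G.neighborFinset v ∩ T) := by
      rw [← card_neighborFinset_eq_degree, ← card_map (.subtype (· ∈ (T : Set V)))]
      congr 1
      ext
      simp
    exact ⟨v, v.2, hdegree ▸ hv ▸ hmax T⟩
  simpa using card_edgeFinset_inter_sym2_le_card_mul exists_degree_le univ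

end DenseSubgraph

section Asymptotics

lemma maxDegree_le_mul {V : Type*} [Fintype V] {G : SimpleGraph V} [DecidableRel G.Adj] {k : ℕ}
    {a t : ℝ} (ha : 0 < a) (ht : 0 < t) (hG : ((2 * (k + 1) : ℕ) : ℕ∞) < G.egirth)
    (hcard : (Fintype.card V : ℝ) ≤ t ^ (k + 1)) (hδ : a * t ≤ (G.minDegree - k : ℕ)) :
    (G.maxDegree : ℝ) ≤ (a ^ k)⁻¹ * t := by
  rw [inv_mul_eq_div, le_div_iff₀ (by positivity)]
  refine le_of_mul_le_mul_right ?_ (pow_pos ht k)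
  calc G.maxDegree * a ^ k * t ^ k = G.maxDegree * (a * t) ^ k := by ring
    _ ≤ G.maxDegree * (G.minDegree - k : ℕ) ^ k := by gcongr
    _ ≤ Fintype.card V := mod_cast maxDegree_mul_pow_le_card hG
    _ ≤ t * t ^ k := hcard.trans_eq (pow_succ' t k)

lemma le_cycleCount_of_le_minDegree {V : Type*} [Fintype V] [DecidableEq V] {G : SimpleGraph V}
    [DecidableRel G.Adj] {k l : ℕ} {a t : ℝ} (ha : 0 < a) (ht : 0 < t) (hl : k + 1 < l)
    (hG : ((2 * (k + 1) : ℕ) : ℕ∞) < G.egirth) (hcard : (Fintype.card V : ℝ) ≤ t ^ (k + 1))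
    (hδ : 2 * a * t ≤ G.minDegree) (hlt : l ≤ a * t)
    (hlarge : 2 * l ^ 2 * (a ^ k)⁻¹ ^ (2 * (l - (k + 1)) - 1) ≤ a ^ (2 * l) * t) :
    a ^ (2 * l) / 2 * t ^ (2 * l) ≤ (2 * l + 1) ^ (2 * l + 1) * cycleCount G (2 * l) := by
  set e := 2 * (l - (k + 1)) - 1
  set κ := (a ^ k)⁻¹
  have le_minDegree_sub {j : ℕ} (hj : j ≤ l) : a * t ≤ (G.minDegree - j : ℕ) := by
    have hjl : (j : ℝ) ≤ l := mod_cast hj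
    have hsub : (G.minDegree : ℝ) ≤ (G.minDegree - j : ℕ) + j := mod_cast le_tsub_add
    linarith
  have minDegree_pos : 0 < G.minDegree := by
    have : (0 : ℝ) < G.minDegree := lt_of_lt_of_le (by positivity) hδ
    exact_mod_cast this
  have : Nonempty V := by
    by_contra hV
    rw [not_nonempty_iff] at hV
    simp at minDegree_pos
  have maxDegree_pos : 0 < G.maxDegree := minDegree_pos.trans_le G.minDegree_le_maxDegree
  have maxDegree_le : (G.maxDegree : ℝ) ≤ κ * t :=
    maxDegree_le_mul ha ht hG hcard (le_minDegree_sub (by omega))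
  have error_le : (Fintype.card V : ℝ) ^ 2 * (l ^ 2 * G.maxDegree ^ e) ≤
      a ^ (2 * l) / 2 * t ^ (2 * l) :=
    calc (Fintype.card V : ℝ) ^ 2 * (l ^ 2 * G.maxDegree ^ e)
        ≤ (t ^ (k + 1)) ^ 2 * (l ^ 2 * (κ * t) ^ e) := by gcongr
      _ = 2 * l ^ 2 * κ ^ e / 2 * t ^ (2 * (k + 1) + e) := by ring
      _ ≤ a ^ (2 * l) * t / 2 * t ^ (2 * (k + 1) + e) := by gcongr
      _ = a ^ (2 * l) / 2 * t ^ (2 * (k + 1) + e + 1) := by ring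
      _ = a ^ (2 * l) / 2 * t ^ (2 * l) := by congr 2; omega
  have main_le : (a * t) ^ (2 * l) ≤ (2 * l + 1) ^ (2 * l + 1) * cycleCount G (2 * l) +
      (Fintype.card V : ℝ) ^ 2 * (l ^ 2 * G.maxDegree ^ e) :=
    calc (a * t) ^ (2 * l) ≤ (G.minDegree - l : ℕ) ^ (2 * l) := by
          gcongr
          exact le_minDegree_sub le_rfl
      _ ≤ _ := mod_cast minDegree_sub_pow_le k.succ_pos hl hG maxDegree_pos
  rw [mul_pow] at main_le
  linarith

lemma le_cycleCount_of_le_card_edgeFinset {V : Type*} [Fintype V] [DecidableEq V] [Nonempty V]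
    {G : SimpleGraph V} [DecidableRel G.Adj] {k l : ℕ} {a t : ℝ} (ha : 0 < a) (ht : 0 < t)
    (hl : k + 1 < l) (hG : ((2 * (k + 1) : ℕ) : ℕ∞) < G.egirth)
    (hcard : (Fintype.card V : ℝ) ≤ t ^ (k + 1))
    (hedges : Fintype.card V * (2 * a * t) ≤ #G.edgeFinset) (hlt : l ≤ a * t)
    (hlarge : 2 * l ^ 2 * (a ^ k)⁻¹ ^ (2 * (l - (k + 1)) - 1) ≤ a ^ (2 * l) * t) :
    a ^ (2 * l) / 2 * t ^ (2 * l) ≤ (2 * l + 1) ^ (2 * l + 1) * cycleCount G (2 * l) := by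
  obtain ⟨S, hS⟩ := exists_card_edgeFinset_le_mul_minDegree_induce G
  have hcontained : G.induce (S : Set V) ⊑ G := ⟨(Embedding.induce (S : Set V)).toCopy⟩
  have hδ : 2 * a * t ≤ (G.induce (S : Set V)).minDegree := by
    refine le_of_mul_le_mul_left (hedges.trans ?_) (Nat.cast_pos.2 Fintype.card_pos)
    exact_mod_cast hS
  have hcardS : (Fintype.card (S : Set V) : ℝ) ≤ t ^ (k + 1) :=
    le_trans (mod_cast Fintype.card_subtype_le _) hcard
  refine (le_cycleCount_of_le_minDegree ha ht hl (hG.trans_le hcontained.egirth_le) hcardS hδ hlt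
    hlarge).trans ?_
  gcongr
  exact cycleCount_le_of_isContained hcontained _

lemma exists_eventually_le_cycleCount {c : ℝ} (hc : 0 < c) {m l : ℕ} (hm : 0 < m) (hl : m < l) :
    ∃ α : ℝ, 0 < α ∧ ∀ᶠ n : ℕ in atTop,
      ∀ (V : Type u) [Fintype V] [DecidableEq V] (G : SimpleGraph V), Fintype.card V = n →
        c * (n : ℝ) ^ ((1 : ℝ) + 1 / m) ≤ (G.edgeSet.ncard : ℝ) → (2 * m : ℕ) < G.egirth →
          α * (n : ℝ) ^ ((2 * l : ℝ) / m) ≤ (cycleCount G (2 * l) : ℝ) := by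
  obtain ⟨k, rfl⟩ := Nat.exists_eq_succ_of_ne_zero hm.ne'
  let a := c / 2
  have ha : 0 < a := half_pos hc
  have tendsto_root : Tendsto (fun n : ℕ ↦ (n : ℝ) ^ (1 / (k.succ : ℝ))) atTop atTop :=
    (tendsto_rpow_atTop (by positivity)).comp tendsto_natCast_atTop_atTop
  refine ⟨a ^ (2 * l) / 2 / (2 * l + 1) ^ (2 * l + 1), by positivity, ?_⟩
  filter_upwards [eventually_gt_atTop 0,
    (tendsto_root.const_mul_atTop ha).eventually_ge_atTop l,
    (tendsto_root.const_mul_atTop (pow_pos ha (2 * l))).eventually_ge_atTop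
      (2 * l ^ 2 * (a ^ k)⁻¹ ^ (2 * (l - (k + 1)) - 1))]
    with n hn hlt hlarge V _ _ G hcard hedges hG
  classical
  set t := (n : ℝ) ^ (1 / (k.succ : ℝ))
  have hn' : (0 : ℝ) < n := Nat.cast_pos.2 hn
  have : Nonempty V := Fintype.card_pos_iff.1 (hcard ▸ hn)
  have t_pow : t ^ (k + 1) = n := by
    simpa [t] using Real.rpow_inv_natCast_pow hn'.le k.succ_ne_zero
  have t_pow_two_mul : t ^ (2 * l) = (n : ℝ) ^ ((2 * l : ℝ) / k.succ) := by
    rw [← Real.rpow_natCast, ← Real.rpow_mul hn'.le]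
    push_cast
    ring_nf
  have hedges' : Fintype.card V * (2 * a * t) ≤ #G.edgeFinset := by
    rw [Real.rpow_add hn', Real.rpow_one, Set.ncard_eq_toFinset_card'] at hedges
    calc Fintype.card V * (2 * a * t) = c * (n * t) := by rw [hcard]; ring
      _ ≤ #G.edgeFinset := hedges
  rw [← t_pow_two_mul, div_mul_eq_mul_div, div_le_iff₀' (by positivity)]
  exact le_cycleCount_of_le_card_edgeFinset ha (by positivity) hl hG (by rw [hcard, t_pow])
    hedges' hlt hlarge

end Asymptotics

theorem main_theorem_general (c : ℝ) (hc : 0 < c) (M m : ℕ) (hm : 0 < m) :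
    ∃ (α : ℝ) (N : ℕ), 0 < α ∧
      ∀ (V : Type u) [Fintype V] [DecidableEq V] (G : SimpleGraph V) (n : ℕ),
        Fintype.card V = n → N ≤ n →
        c * (n : ℝ) ^ ((1 : ℝ) + 1 / m) ≤ (G.edgeSet.ncard : ℝ) →
        (2 * m : ℕ) < G.egirth →
        ∀ ℓ : ℕ, m + 1 ≤ ℓ → ℓ ≤ M →
          α * (n : ℝ) ^ ((2 * ℓ : ℝ) / m) ≤ (cycleCount G (2 * ℓ) : ℝ) := by
  choose! α α_pos hα using fun ℓ (hℓ : m < ℓ) ↦ exists_eventually_le_cycleCount.{u} hc hm hℓ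
  have mem_Icc_lt : ∀ ℓ ∈ Icc (m + 1) M, m < ℓ := fun ℓ hℓ ↦ (mem_Icc.1 hℓ).1
  have eventually_le : ∀ᶠ β in nhdsWithin 0 (Set.Ioi (0 : ℝ)), ∀ ℓ ∈ Icc (m + 1) M, β ≤ α ℓ :=
    (eventually_all_finset _).2 fun ℓ hℓ ↦
      (eventually_le_nhds (α_pos ℓ (mem_Icc_lt ℓ hℓ))).filter_mono nhdsWithin_le_nhds
  obtain ⟨β, hβ, β_pos⟩ := (eventually_le.and self_mem_nhdsWithin).exists
  obtain ⟨N, hN⟩ := eventually_atTop.1 <| (eventually_all_finset (Icc (m + 1) M)).2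
    fun ℓ hℓ ↦ hα ℓ (mem_Icc_lt ℓ hℓ)
  refine ⟨β, N, β_pos, fun V _ _ G n hcard hn hedges hG ℓ hmℓ hℓM ↦ ?_⟩
  have hℓ : ℓ ∈ Icc (m + 1) M := mem_Icc.2 ⟨hmℓ, hℓM⟩
  refine le_trans ?_ (hN n hn ℓ hℓ V G hcard hedges hG)
  gcongr
  exact hβ ℓ hℓ

/-- For every real `c > 0` and integers `M > m ≥ 2` there exist `α > 0` and `N` such
that every graph `G` on `n ≥ N` vertices with at least `c·n^{1+1/m}` edges and girth
greater than `2m` has, for every `m+1 ≤ ℓ ≤ M`, at least `α·n^{2ℓ/m}` cycles of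
length `2ℓ`. -/
theorem main_theorem (c : ℝ) (hc : 0 < c) (M m : ℕ) (hm : 2 ≤ m) (hM : m < M) :
    ∃ (α : ℝ) (N : ℕ), 0 < α ∧
      ∀ (V : Type) [Fintype V] [DecidableEq V] (G : SimpleGraph V) (n : ℕ),
        Fintype.card V = n → N ≤ n →
        c * (n : ℝ) ^ ((1 : ℝ) + 1 / m) ≤ (G.edgeSet.ncard : ℝ) →
        (2 * m : ℕ) < G.egirth →
        ∀ ℓ : ℕ, m + 1 ≤ ℓ → ℓ ≤ M →
          α * (n : ℝ) ^ ((2 * ℓ : ℝ) / m) ≤ (cycleCount G (2 * ℓ) : ℝ) :=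
  main_theorem_general c hc M m (by omega)
end
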